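/- arXiv:1603.06639 — 2 statements merged into one kernel-verified Lean document; each statement's English description precedes it below -/
import Mathlib

section
/- Let (R, m) be a regular local ring of dimension n containing a field, and let I be a proper ideal of R all of whose minimal primes have height d. Then for every integer i > d, dim_R(H_I^i(R)) ≤ n − (i + 1); in other words, every prime ideal p in the support of H_I^i(R) satisfies ht_R(p) ≥ i + 1. -/
open CategoryTheory Opposite

noncomputable section

/-- Krull dimension of the support of a module. -/
def moduleSuppDim (R : Type) [CommRing R] (M : Type) [AddCommGroup M] [Module R M] :
    WithBot ℕ∞ :=
  Order.krullDim (Module.support R M)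

/-- `M` has injective dimension at most `n` (as `R`-module), characterized by
vanishing of `Ext^i(N, M)` for all `i > n`. -/
def injDimLE (R : Type) [CommRing R] (M : Type) [AddCommGroup M] [Module R M] (n : ℕ) : Prop :=
  ∀ (N : ModuleCat R) (i : ℕ), n < i →
    Subsingleton (((Ext R (ModuleCat R) i).obj (op N)).obj (ModuleCat.of R M))

/-- The injective dimension of `M` as an `R`-module, valued in `ℕ∞`. -/
def injDim (R : Type) [CommRing R] (M : Type) [AddCommGroup M] [Module R M] : ℕ∞ :=
  sInf {n : ℕ∞ | ∃ m : ℕ, (m : ℕ∞) = n ∧ injDimLE R M m}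

/-- The height of an ideal: the infimum of the heights of primes containing it. -/
def idealHeight (R : Type) [CommRing R] (I : Ideal R) : ℕ∞ :=
  sInf {h : ℕ∞ | ∃ p : PrimeSpectrum R, I ≤ p.asIdeal ∧ Order.height p = h}

/-- A regular local ring: a Noetherian local ring whose maximal ideal can be generated
by `dim R` elements. -/
def IsRegularLocal (R : Type) [CommRing R] [IsLocalRing R] : Prop :=
  IsNoetherianRing R ∧
    ∃ s : Finset R, Ideal.span (s : Set R) = IsLocalRing.maximalIdeal R ∧
      (s.card : WithBot ℕ∞) = ringKrullDim R

/-- A ring contains a field if some subring of it is a field. -/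
def ContainsField (R : Type) [CommRing R] : Prop :=
  ∃ k : Subring R, IsField k

/-- The underlying module of the `i`-th local cohomology of `R` with support in `I`. -/
abbrev LocalCohomologyMod (R : Type) [CommRing R] (I : Ideal R) (i : ℕ) : Type :=
  (localCohomology I i).obj (ModuleCat.of R R)

end
noncomputable section
namespace S8

/-- projective dimension at most k, unbundled -/
def Pd (A : Type) [CommRing A] (M : Type) [AddCommGroup M] [Module A M] (k : ℕ) : Prop :=
  HasProjectiveDimensionLE (ModuleCat.of A M) k

section pd
variable {A : Type} [CommRing A]

lemma pd_zero_iff {M : Type} [AddCommGroup M] [Module A M] : Pd A M 0 ↔ Module.Projective A M := by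
  unfold Pd
  rw [← projective_iff_hasProjectiveDimensionLE_zero, IsProjective.iff_projective]

lemma pd_succ_iff {K F M : Type} [AddCommGroup M] [Module A M] [AddCommGroup K] [Module A K]
    [AddCommGroup F] [Module A F] [Module.Projective A F] (i : K →ₗ[A] F) (π : F →ₗ[A] M)
    (hi : Function.Injective i) (hπ : Function.Surjective π) (hex : Function.Exact i π) (k : ℕ) :
    Pd A M (k+1) ↔ Pd A K k := by
  let S : ShortComplex (ModuleCat.{0} A) := ShortComplex.mk (ModuleCat.ofHom i) (ModuleCat.ofHom π)
    (by rw [← ModuleCat.ofHom_comp, hex.linearMap_comp_eq_zero]; rfl)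
  have hS : S.ShortExact := ModuleCat.shortComplex_shortExact S hex hi hπ
  exact hS.hasProjectiveDimensionLT_X₃_iff k
    ((IsProjective.iff_projective (R := A) F).mp inferInstance)

lemma pd_mono {M : Type} [AddCommGroup M] [Module A M] {k l : ℕ} (h : k ≤ l) (hk : Pd A M k) :
    Pd A M l := by
  unfold Pd HasProjectiveDimensionLE at *
  exact hasProjectiveDimensionLT_of_ge _ (k+1) _ (by omega)

lemma pd_retract {M N : Type} [AddCommGroup M] [Module A M] [AddCommGroup N] [Module A N]
    (f : M →ₗ[A] N) (g : N →ₗ[A] M) (h : ∀ x, g (f x) = x) {k : ℕ} (hN : Pd A N k) : Pd A M k := by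
  unfold Pd HasProjectiveDimensionLE at *
  have r : Retract (ModuleCat.of A M) (ModuleCat.of A N) :=
    ⟨ModuleCat.ofHom f, ModuleCat.ofHom g, by
      rw [← ModuleCat.ofHom_comp]; ext x; exact h x⟩
  exact r.hasProjectiveDimensionLT _

lemma pd_congr {M N : Type} [AddCommGroup M] [Module A M] [AddCommGroup N] [Module A N]
    (e : M ≃ₗ[A] N) {k : ℕ} : Pd A M k ↔ Pd A N k :=
  ⟨fun h => pd_retract e.symm.toLinearMap e.toLinearMap (by simp) h,
   fun h => pd_retract e.toLinearMap e.symm.toLinearMap (by simp) h⟩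

end pd

section L12
variable {A : Type} [CommRing A] [IsNoetherianRing A] [IsLocalRing A]
open IsLocalRing

open Pointwise in
lemma quot_inj {A : Type} [CommRing A] {K F M : Type} [AddCommGroup M] [Module A M] [AddCommGroup K] [Module A K]
    [AddCommGroup F] [Module A F] (i : K →ₗ[A] F) (π : F →ₗ[A] M) (x : A)
    (hi : Function.Injective i) (hex : Function.Exact i π) (hx : IsSMulRegular M x) :
    Function.Injective (QuotSMulTop.map x i) := by
  rw [injective_iff_map_eq_zero]
  intro a ha
  obtain ⟨a, rfl⟩ := Submodule.Quotient.mk_surjective _ a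
  rw [QuotSMulTop.map_apply_mk, Submodule.Quotient.mk_eq_zero] at ha
  rw [Submodule.Quotient.mk_eq_zero]
  obtain ⟨f, -, hf⟩ := (Submodule.mem_smul_pointwise_iff_exists _ _ _).mp ha
  have h1 : x • π f = x • 0 := by
    rw [← map_smul, hf, hex.apply_apply_eq_zero, smul_zero]
  obtain ⟨b, rfl⟩ := (hex f).mp (hx h1)
  rw [← map_smul] at hf
  rw [← hi hf]
  exact Submodule.smul_mem_pointwise_smul _ _ _ trivial

lemma L12 {x : A} (hxm : x ∈ maximalIdeal A) (hxA : IsSMulRegular A x) (k : ℕ) :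
    ∀ (M : Type) [AddCommGroup M] [Module A M] [Module.Finite A M] (_ : IsSMulRegular M x),
    Pd A M k ↔ Pd (A ⧸ Ideal.span {x}) (QuotSMulTop x M) k := by
  have hloc : IsLocalRing (A ⧸ Ideal.span {x}) := by
    have : Nontrivial (A ⧸ Ideal.span {x}) := Ideal.Quotient.nontrivial_iff.mpr (by
      intro h
      have : Ideal.span {x} ≤ maximalIdeal A := by
        rw [Ideal.span_le]; simpa using hxm
      rw [h] at this
      exact (maximalIdeal.isMaximal A).ne_top (top_le_iff.mp this))
    exact IsLocalRing.of_surjective' _ Ideal.Quotient.mk_surjective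
  induction k with
  | zero =>
    intro M _ _ _ hx
    rw [pd_zero_iff, pd_zero_iff]
    have : Module.Finite (A ⧸ Ideal.span {x}) (QuotSMulTop x M) :=
      Module.Finite.of_restrictScalars_finite A _ _
    have := Module.finitePresentation_of_finite A M
    have key := Module.free_quotSMulTop_iff_free (R := A) (M := M) (x := x)
      (IsLocalRing.maximalIdeal_le_jacobson _ hxm) hx
    constructor
    · intro h
      have : Module.Free A M := Module.free_of_flat_of_isLocalRing
      have := key.mpr this
      infer_instance
    · intro h
      have : Module.Free (A ⧸ Ideal.span {x}) (QuotSMulTop x M) := Module.free_of_flat_of_isLocalRing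
      have := key.mp this
      infer_instance
  | succ k ih =>
    intro M _ _ _ hx
    obtain ⟨n, π, hπ⟩ := Module.Finite.exists_fin' A M
    let K := LinearMap.ker π
    have hex : Function.Exact K.subtype π := LinearMap.exact_subtype_ker_map π
    rw [pd_succ_iff K.subtype π K.injective_subtype hπ hex]
    have hxF : IsSMulRegular (Fin n → A) x := fun a b hab => by
      funext j; exact hxA (congrFun hab j)
    have hxK : IsSMulRegular K x := fun a b hab => by
      apply Subtype.ext; exact hxF (congrArg Subtype.val hab)
    rw [ih K hxK]
    have hs : Function.Surjective (algebraMap A (A ⧸ Ideal.span {x})) := Ideal.Quotient.mk_surjective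
    refine (pd_succ_iff (LinearMap.extendScalarsOfSurjective hs (QuotSMulTop.map x K.subtype))
      (LinearMap.extendScalarsOfSurjective hs (QuotSMulTop.map x π)) ?_ ?_ ?_ k).symm
    · exact quot_inj K.subtype π x K.injective_subtype hex hx
    · exact QuotSMulTop.map_surjective x hπ
    · exact QuotSMulTop.map_exact x hex hπ
end L12
end S8
end

noncomputable section
namespace S8
open IsLocalRing

/-- maximal ideal generated by e elements -/
def Gen (A : Type) [CommRing A] [IsLocalRing A] (e : ℕ) : Prop :=
  ∃ g : Fin e → A, Ideal.span (Set.range g) = maximalIdeal A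

/-- regular local of dimension e -/
def Reg (A : Type) [CommRing A] [IsLocalRing A] (e : ℕ) : Prop :=
  Gen A e ∧ ringKrullDim A = e

section
variable {A : Type} [CommRing A] [IsLocalRing A]

lemma loc_quot {x : A} (hx : x ∈ maximalIdeal A) : IsLocalRing (A ⧸ Ideal.span {x}) := by
  have : Nontrivial (A ⧸ Ideal.span {x}) := Ideal.Quotient.nontrivial_iff.mpr (by
      intro h
      have : Ideal.span {x} ≤ maximalIdeal A := by
        rw [Ideal.span_le]; simpa using hx
      rw [h] at this
      exact (maximalIdeal.isMaximal A).ne_top (top_le_iff.mp this))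
  exact IsLocalRing.of_surjective' _ Ideal.Quotient.mk_surjective

lemma max_map {B : Type} [CommRing B] [IsLocalRing B] (f : A →+* B) (hf : Function.Surjective f) :
    (maximalIdeal A).map f = maximalIdeal B := by
  have : (maximalIdeal B).comap f = maximalIdeal A :=
    IsLocalRing.eq_maximalIdeal (Ideal.comap_isMaximal_of_surjective f hf)
  rw [← this, Ideal.map_comap_of_surjective f hf]

lemma gen_dim [IsNoetherianRing A] {e : ℕ} (h : Gen A e) : ringKrullDim A ≤ e := by
  obtain ⟨g, hg⟩ := h
  refine (ringKrullDim_le_spanFinrank_maximalIdeal A).trans ?_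
  rw [← hg]
  have := Submodule.spanFinrank_span_le_ncard_of_finite (R := A) (Set.finite_range g)
  have h2 : (Set.range g).ncard ≤ e := by
    rw [← Set.image_univ]
    refine (Set.ncard_image_le Set.finite_univ).trans ?_
    simp [Set.ncard_univ]
  exact_mod_cast this.trans h2

lemma gen_quot {e : ℕ} (h : Gen A (e+1)) {x : A} (hx : x ∈ maximalIdeal A)
    (hx2 : x ∉ maximalIdeal A ^ 2) [IsLocalRing (A ⧸ Ideal.span {x})] :
    Gen (A ⧸ Ideal.span {x}) e := by
  obtain ⟨g, hg⟩ := h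
  have hgm : ∀ i, g i ∈ maximalIdeal A := fun i => hg ▸ Ideal.subset_span ⟨i, rfl⟩
  have hx' := hx
  rw [← hg, Ideal.mem_span_range_iff_exists_fun] at hx'
  obtain ⟨c, hc⟩ := hx'
  have : ∃ i, IsUnit (c i) := by
    by_contra hcon
    push Not at hcon
    apply hx2
    rw [← hc, pow_two]
    exact Ideal.sum_mem _ fun i _ => Ideal.mul_mem_mul ((mem_maximalIdeal _).mpr (hcon i)) (hgm i)
  obtain ⟨i, hi⟩ := this
  let q := Ideal.Quotient.mk (Ideal.span {x})
  refine ⟨fun j => q (g (i.succAbove j)), ?_⟩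
  rw [← max_map q Ideal.Quotient.mk_surjective, ← hg, Ideal.map_span]
  apply le_antisymm
  · apply Ideal.span_mono
    rintro _ ⟨j, rfl⟩
    exact ⟨_, ⟨_, rfl⟩, rfl⟩
  · rw [Ideal.span_le]
    rintro _ ⟨_, ⟨j, rfl⟩, rfl⟩
    by_cases hj : j = i
    · subst hj
      have h0 : q x = 0 := Ideal.Quotient.eq_zero_iff_mem.mpr (Ideal.mem_span_singleton_self x)
      have h0' : q (∑ i, c i * g i) = 0 := (congrArg q hc).trans h0
      rw [Fin.sum_univ_succAbove _ j, map_add, map_mul] at h0'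
      have h1 : q (c j) * q (g j) ∈ Ideal.span (Set.range fun k => q (g (j.succAbove k))) := by
        rw [eq_neg_of_add_eq_zero_left h0', map_sum]
        apply neg_mem
        refine Ideal.sum_mem _ fun k _ => ?_
        rw [map_mul]
        exact Ideal.mul_mem_left _ _ (Ideal.subset_span ⟨k, rfl⟩)
      exact (Ideal.unit_mul_mem_iff_mem _ (hi.map q)).mp h1
    · obtain ⟨k, rfl⟩ := Fin.exists_succAbove_eq hj
      exact Ideal.subset_span ⟨k, rfl⟩

lemma gen_lift {e : ℕ} {x : A} (hx : x ∈ maximalIdeal A) [IsLocalRing (A ⧸ Ideal.span {x})]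
    (h : Gen (A ⧸ Ideal.span {x}) e) : Gen A (e+1) := by
  obtain ⟨g, hg⟩ := h
  let q := Ideal.Quotient.mk (Ideal.span {x})
  choose g' hg' using fun i => Ideal.Quotient.mk_surjective (g i)
  have hcm : (maximalIdeal (A ⧸ Ideal.span {x})).comap q = maximalIdeal A :=
    IsLocalRing.eq_maximalIdeal (Ideal.comap_isMaximal_of_surjective q Ideal.Quotient.mk_surjective)
  refine ⟨Fin.cons x g', ?_⟩
  apply le_antisymm
  · rw [Ideal.span_le]
    rintro _ ⟨j, rfl⟩
    refine Fin.cases ?_ (fun j => ?_) j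
    · simpa using hx
    · rw [Fin.cons_succ, ← hcm]
      change q (g' j) ∈ maximalIdeal (A ⧸ Ideal.span {x})
      rw [show q (g' j) = g j from hg' j, ← hg]
      exact Ideal.subset_span ⟨j, rfl⟩
  · intro y hy
    have : q y ∈ maximalIdeal (A ⧸ Ideal.span {x}) := by rw [← hcm] at hy; exact hy
    rw [← hg, Ideal.mem_span_range_iff_exists_fun] at this
    obtain ⟨c, hc⟩ := this
    choose c' hc' using fun i => Ideal.Quotient.mk_surjective (c i)
    have h0 : q (y - ∑ i, c' i * g' i) = 0 := by
      rw [map_sub, map_sum, sub_eq_zero, ← hc]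
      refine Finset.sum_congr rfl fun i _ => ?_
      rw [map_mul]; congr 1
      · exact (hc' i).symm
      · exact (hg' i).symm
    have h1 := Ideal.Quotient.eq_zero_iff_mem.mp h0
    have h2 : y - ∑ i, c' i * g' i ∈ Ideal.span (Set.range (Fin.cons x g' : Fin (e+1) → A)) := by
      refine Ideal.span_mono ?_ h1
      rintro _ rfl
      exact ⟨0, by simp⟩
    have h3 : ∑ i, c' i * g' i ∈ Ideal.span (Set.range (Fin.cons x g' : Fin (e+1) → A)) :=
      Ideal.sum_mem _ fun i _ => Ideal.mul_mem_left _ _ (Ideal.subset_span ⟨i.succ, by simp⟩)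
    simpa using add_mem h2 h3

variable [IsNoetherianRing A]

lemma reg_quot {e : ℕ} (h : Reg A (e+1)) {x : A} (hx : x ∈ maximalIdeal A)
    (hx2 : x ∉ maximalIdeal A ^ 2) [IsLocalRing (A ⧸ Ideal.span {x})] :
    Reg (A ⧸ Ideal.span {x}) e := by
  have hg := gen_quot h.1 hx hx2
  refine ⟨hg, le_antisymm (gen_dim hg) ?_⟩
  have := ringKrullDim_le_ringKrullDim_quotient_add_encard (R := A) {x} (by
    rw [IsLocalRing.ringJacobson_eq_maximalIdeal]; simpa using hx)
  rw [h.2, Set.encard_singleton] at this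
  have h2 : (e : WithBot ℕ∞) + 1 ≤ ringKrullDim (A ⧸ Ideal.span {x}) + 1 := by
    exact_mod_cast this
  exact (ENat.WithBot.add_le_add_one_right_iff).mp h2

lemma reg_lift {e : ℕ} {x : A} (hx : x ∈ maximalIdeal A) (hx0 : IsSMulRegular A x)
    [IsLocalRing (A ⧸ Ideal.span {x})]
    (h : Reg (A ⧸ Ideal.span {x}) e) : Reg A (e+1) := by
  refine ⟨gen_lift hx h.1, ?_⟩
  rw [← ringKrullDim_quotient_span_singleton_succ_eq_ringKrullDim_of_mem_jacobson hx0
    (by rwa [IsLocalRing.ringJacobson_eq_maximalIdeal]), h.2]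
  rfl

lemma sq_ne (h : maximalIdeal A ≠ ⊥) : ¬ maximalIdeal A ≤ maximalIdeal A ^ 2 := by
  intro hle
  apply h
  refine Submodule.eq_bot_of_le_smul_of_le_jacobson_bot (maximalIdeal A) _ (IsNoetherian.noetherian _) ?_
    (IsLocalRing.maximalIdeal_le_jacobson _)
  rwa [smul_eq_mul, ← pow_two]

/-- avoidance of finitely many primes and m^2 -/
lemma avoid {S : Set (Ideal A)} (hS : S.Finite) (hp : ∀ P ∈ S, P.IsPrime)
    (hm : ∀ P ∈ S, ¬ maximalIdeal A ≤ P) (h0 : maximalIdeal A ≠ ⊥) :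
    ∃ x ∈ maximalIdeal A, x ∉ maximalIdeal A ^ 2 ∧ ∀ P ∈ S, x ∉ P := by
  by_contra hcon
  push Not at hcon
  have key := (Ideal.subset_union_prime (s := insert (maximalIdeal A ^ 2) hS.toFinset) (f := id)
    (maximalIdeal A ^ 2) (maximalIdeal A ^ 2) (by
      intro P hP h1 _
      rw [Finset.mem_insert] at hP
      exact hp P (by simpa using hP.resolve_left h1)) (I := maximalIdeal A)).mp (by
      intro x hx
      by_cases h2 : x ∈ maximalIdeal A ^ 2
      · exact Set.mem_biUnion (by simp) h2
      · obtain ⟨P, hP, hxP⟩ := hcon x hx h2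
        exact Set.mem_biUnion (x := P) (by simp [hP]) hxP)
  obtain ⟨P, hP, hle⟩ := key
  rw [Finset.mem_insert] at hP
  rcases hP with rfl | hP
  · exact sq_ne h0 hle
  · exact hm P (by simpa using hP) hle
end

lemma max_eq_bot {A : Type} [CommRing A] [IsLocalRing A] (h : Gen A 0) : maximalIdeal A = ⊥ := by
  obtain ⟨g, hg⟩ := h
  rw [← hg]; simp

lemma max_ne_bot {A : Type} [CommRing A] [IsLocalRing A] {e : ℕ} (h : ringKrullDim A = (e+1 : ℕ)) :
    maximalIdeal A ≠ ⊥ := by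
  intro h0
  have hf := (IsLocalRing.isField_iff_maximalIdeal_eq).mpr h0
  rw [ringKrullDim_eq_zero_of_isField hf] at h
  have : (0 : ℕ) = e + 1 := by exact_mod_cast h
  omega

lemma reg_domain (e : ℕ) : ∀ (A : Type) [CommRing A] [IsLocalRing A] [IsNoetherianRing A],
    Reg A e → IsDomain A := by
  induction e with
  | zero =>
    intro A _ _ _ h
    have hf := (IsLocalRing.isField_iff_maximalIdeal_eq).mpr (max_eq_bot h.1)
    exact hf.isDomain
  | succ e ih =>
    intro A _ _ _ h
    obtain ⟨x, hx, hx2, hxP⟩ := avoid (A := A) (S := minimalPrimes A) (minimalPrimes.finite_of_isNoetherianRing A)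
      (fun P hP => hP.1.1) (by
        intro P hP hle
        have h1 : maximalIdeal A = P := (maximalIdeal.isMaximal A).eq_of_le
          (hP.1.1).ne_top hle
        have hPp := hP.1.1
        have h2 := IsLocalRing.maximalIdeal_height_eq_ringKrullDim (R := A)
        rw [h.2, h1, Ideal.height_eq_zero_iff.mpr hP] at h2
        have : (0 : ℕ) = e + 1 := by exact_mod_cast h2
        omega) (max_ne_bot h.2)
    have hl := loc_quot hx
    have hd := ih _ (reg_quot h hx hx2)
    have hpr : (Ideal.span {x}).IsPrime := (Ideal.Quotient.isDomain_iff_prime _).mp hd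
    obtain ⟨P, hP, hPx⟩ := Ideal.exists_minimalPrimes_le (bot_le (a := Ideal.span {x}))
    have hPp := hP.1.1
    have hxP := hxP P hP
    have : P = ⊥ := by
      refine Submodule.eq_bot_of_le_smul_of_le_jacobson_bot (maximalIdeal A) _ (IsNoetherian.noetherian _) ?_
        (IsLocalRing.maximalIdeal_le_jacobson _)
      intro y hy
      obtain ⟨z, rfl⟩ := Ideal.mem_span_singleton'.mp (hPx hy)
      rw [mul_comm]
      exact Ideal.mul_mem_mul hx ((hPp.mem_or_mem hy).resolve_right hxP)
    subst this
    exact IsDomain.of_bot_isPrime A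

lemma reg_pd (e : ℕ) : ∀ (A : Type) [CommRing A] [IsLocalRing A] [IsNoetherianRing A],
    Reg A e → ∀ (M : Type) [AddCommGroup M] [Module A M] [Module.Finite A M], Pd A M e := by
  induction e with
  | zero =>
    intro A _ _ _ h M _ _ _
    have hf := (IsLocalRing.isField_iff_maximalIdeal_eq).mpr (max_eq_bot h.1)
    letI := hf.toField
    rw [pd_zero_iff]
    exact Module.Projective.of_free (R := A)
  | succ e ih =>
    intro A _ _ _ h M _ _ _
    have := reg_domain _ A h
    obtain ⟨x, hx, hx2, -⟩ := avoid (A := A) (S := ∅) Set.finite_empty (by simp) (by simp)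
      (max_ne_bot h.2)
    have hl := loc_quot hx
    have hx0 : x ≠ 0 := by rintro rfl; exact hx2 (zero_mem _)
    obtain ⟨n, π, hπ⟩ := Module.Finite.exists_fin' A M
    let K := LinearMap.ker π
    have hex : Function.Exact K.subtype π := LinearMap.exact_subtype_ker_map π
    rw [pd_succ_iff K.subtype π K.injective_subtype hπ hex]
    have hxA : IsSMulRegular A x := fun a b hab => mul_left_cancel₀ hx0 hab
    have hxF : IsSMulRegular (Fin n → A) x := fun a b hab => by
      funext j; exact hxA (congrFun hab j)
    have hxK : IsSMulRegular K x := fun a b hab => by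
      apply Subtype.ext; exact hxF (congrArg Subtype.val hab)
    rw [L12 hx hxA e K hxK]
    have : Module.Finite (A ⧸ Ideal.span {x}) (QuotSMulTop x K) :=
      Module.Finite.of_restrictScalars_finite A _ _
    exact ih _ (reg_quot h hx hx2) _
end S8
end

noncomputable section
namespace S8
open IsLocalRing

section
variable {A : Type} [CommRing A] [IsLocalRing A]

lemma min_cover (M : Type) [AddCommGroup M] [Module A M] [Module.Finite A M] :
    ∃ (n : ℕ) (π : (Fin n → A) →ₗ[A] M), Function.Surjective π ∧
      ∀ v, π v = 0 → ∀ i, v i ∈ maximalIdeal A := by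
  classical
  have hex : ∃ n : ℕ, ∃ π : (Fin n → A) →ₗ[A] M, Function.Surjective π := by
    obtain ⟨n, π, hπ⟩ := Module.Finite.exists_fin' A M
    exact ⟨n, π, hπ⟩
  obtain ⟨π, hπ⟩ := Nat.find_spec hex
  have hmin := fun m => Nat.find_min (m := m) hex
  generalize Nat.find hex = n at π hπ hmin
  refine ⟨n, π, hπ, ?_⟩
  intro v hv i
  by_contra hcon
  have hu : IsUnit (v i) := by
    by_contra h; exact hcon ((mem_maximalIdeal _).mpr h)
  obtain ⟨c, hc⟩ := hu.exists_left_inv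
  cases n with
  | zero => exact i.elim0
  | succ n =>
    let ι : (Fin n → A) →ₗ[A] (Fin (n+1) → A) :=
      { toFun := fun w => i.insertNth 0 w
        map_add' := fun a b => by
          funext j
          refine Fin.succAboveCases i ?_ (fun j => ?_) j <;> simp
        map_smul' := fun a b => by
          funext j
          refine Fin.succAboveCases i ?_ (fun j => ?_) j <;> simp }
    refine hmin n (by omega) ⟨π ∘ₗ ι, ?_⟩
    intro y
    obtain ⟨w, rfl⟩ := hπ y
    let w' := w - (w i * c) • v
    refine ⟨fun j => w' (i.succAbove j), ?_⟩
    have h1 : ι (fun j => w' (i.succAbove j)) = w' := by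
      funext j
      refine Fin.succAboveCases i ?_ (fun j => ?_) j
      · simp [ι, w', mul_assoc, hc]
      · simp [ι]
    rw [LinearMap.comp_apply, h1]
    simp [w', hv]

variable [IsNoetherianRing A]

lemma free_of_soc {a : A} (ha : a ≠ 0) (ham : ∀ y ∈ maximalIdeal A, a * y = 0) (k : ℕ) :
    ∀ (M : Type) [AddCommGroup M] [Module A M] [Module.Finite A M], Pd A M k → Module.Free A M := by
  induction k with
  | zero =>
    intro M _ _ _ h
    rw [pd_zero_iff] at h
    have := Module.finitePresentation_of_finite A M
    exact Module.free_of_flat_of_isLocalRing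
  | succ k ih =>
    intro M _ _ _ h
    obtain ⟨n, π, hπ, hK⟩ := min_cover (A := A) M
    let K := LinearMap.ker π
    have hex : Function.Exact K.subtype π := LinearMap.exact_subtype_ker_map π
    rw [pd_succ_iff K.subtype π K.injective_subtype hπ hex] at h
    have hfree := ih K h
    have haK : ∀ v : K, a • v = 0 := by
      intro v
      apply Subtype.ext
      funext i
      exact ham _ (hK v.1 v.2 i)
    have hsub : Subsingleton K := by
      by_contra hns
      rw [not_subsingleton_iff_nontrivial] at hns
      apply ha
      let b := Module.Free.chooseBasis A K
      obtain ⟨i⟩ := b.index_nonempty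
      have := congrArg (fun z => b.repr z i) (haK (b i))
      simpa using this
    have hinj : Function.Injective π := by
      rw [← LinearMap.ker_eq_bot]
      exact Submodule.subsingleton_iff_eq_bot.mp hsub
    exact Module.Free.of_equiv (LinearEquiv.ofBijective π ⟨hinj, hπ⟩)

lemma reg_zero (h : maximalIdeal A = ⊥) : Reg A 0 :=
  ⟨⟨Fin.elim0, by rw [h]; simp⟩, by
    have hf := (IsLocalRing.isField_iff_maximalIdeal_eq).mpr h
    rw [ringKrullDim_eq_zero_of_isField hf]; rfl⟩

open Pointwise in
lemma pd_residue {x : A} (hx : x ∈ maximalIdeal A) (hx2 : x ∉ maximalIdeal A ^ 2)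
    [IsLocalRing (A ⧸ Ideal.span {x})] {k : ℕ}
    (h : Pd (A ⧸ Ideal.span {x}) (QuotSMulTop x (maximalIdeal A)) k) :
    Pd (A ⧸ Ideal.span {x}) ((A ⧸ Ideal.span {x}) ⧸ maximalIdeal (A ⧸ Ideal.span {x})) k := by
  let B := A ⧸ Ideal.span {x}
  let q : A →+* B := Ideal.Quotient.mk (Ideal.span {x})
  have hqm : ∀ y, y ∈ maximalIdeal A ↔ q y ∈ maximalIdeal B := by
    have hcm : (maximalIdeal B).comap q = maximalIdeal A :=
      IsLocalRing.eq_maximalIdeal (Ideal.comap_isMaximal_of_surjective q Ideal.Quotient.mk_surjective)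
    intro y; rw [← hcm]; rfl
  have hs : Function.Surjective (algebraMap A B) := Ideal.Quotient.mk_surjective
  let xm : maximalIdeal A := ⟨x, hx⟩
  let X : QuotSMulTop x (maximalIdeal A) := Submodule.Quotient.mk xm
  let f : (B ⧸ maximalIdeal B) →ₗ[B] QuotSMulTop x (maximalIdeal A) :=
    Submodule.liftQ (maximalIdeal B) (LinearMap.toSpanSingleton B _ X) (by
      intro y hy
      obtain ⟨y, rfl⟩ := Ideal.Quotient.mk_surjective y
      have hy' := (hqm y).mpr hy
      rw [LinearMap.mem_ker, LinearMap.toSpanSingleton_apply]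
      change algebraMap A B y • X = 0
      rw [algebraMap_smul]
      change Submodule.Quotient.mk (y • xm) = _
      rw [Submodule.Quotient.mk_eq_zero]
      have : y • xm = x • (⟨y, hy'⟩ : maximalIdeal A) := Subtype.ext (mul_comm y x)
      rw [this]
      exact Submodule.smul_mem_pointwise_smul _ _ _ trivial)
  -- functional
  let v : CotangentSpace A := (maximalIdeal A).toCotangent xm
  have hv : v ≠ 0 := by
    intro h0
    exact hx2 (by simpa [v, xm, Ideal.toCotangent_eq_zero] using h0)
  obtain ⟨g0, hg0⟩ := LinearMap.exists_leftInverse_of_injective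
    (LinearMap.toSpanSingleton (ResidueField A) (CotangentSpace A) v)
    (LinearMap.ker_toSpanSingleton _ hv)
  have hg0v : g0 v = 1 := by
    have := LinearMap.congr_fun hg0 1
    simpa using this
  let r : ResidueField A →ₗ[A] (B ⧸ maximalIdeal B) :=
    Submodule.liftQ (maximalIdeal A) (LinearMap.toSpanSingleton A (B ⧸ maximalIdeal B) 1) (by
      intro y hy
      rw [LinearMap.mem_ker, LinearMap.toSpanSingleton_apply]
      change (Submodule.Quotient.mk (y • (1 : B)) : B ⧸ maximalIdeal B) = 0
      rw [Submodule.Quotient.mk_eq_zero]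
      have : y • (1 : B) = q y := by rw [Algebra.smul_def, mul_one]; rfl
      rw [this]
      exact (hqm y).mp hy)
  have hr1 : r 1 = 1 := by
    change (LinearMap.toSpanSingleton A (B ⧸ maximalIdeal B) 1) 1 = 1
    simp
  let φ : maximalIdeal A →ₗ[A] (B ⧸ maximalIdeal B) :=
    r ∘ₗ (g0.restrictScalars A) ∘ₗ (maximalIdeal A).toCotangent
  have hkill : ∀ z : B ⧸ maximalIdeal B, x • z = 0 := by
    intro z
    obtain ⟨z, rfl⟩ := Submodule.Quotient.mk_surjective _ z
    rw [← Submodule.Quotient.mk_smul, Submodule.Quotient.mk_eq_zero]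
    have : x • z = q x * z := Algebra.smul_def x z
    rw [this]
    exact Ideal.mul_mem_right _ _ ((hqm x).mp hx)
  let G : QuotSMulTop x (maximalIdeal A) →ₗ[A] (B ⧸ maximalIdeal B) :=
    Submodule.liftQ _ φ (by
      intro y hy
      obtain ⟨z, -, rfl⟩ := (Submodule.mem_smul_pointwise_iff_exists _ _ _).mp hy
      rw [LinearMap.mem_ker, map_smul, hkill])
  have hG : G X = 1 := by
    change r (g0 v) = 1
    rw [hg0v, hr1]
  refine pd_retract f (LinearMap.extendScalarsOfSurjective hs G) ?_ h
  intro z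
  obtain ⟨z, rfl⟩ := Submodule.Quotient.mk_surjective _ z
  change (LinearMap.extendScalarsOfSurjective hs G) (z • X) = _
  rw [map_smul]
  change z • (G X) = _
  rw [hG]
  change Submodule.Quotient.mk (z • (1 : B)) = _
  rw [smul_eq_mul, mul_one]
end

lemma serre (e : ℕ) : ∀ (A : Type) [CommRing A] [IsLocalRing A] [IsNoetherianRing A],
    Gen A e → ∀ k, Pd A (A ⧸ maximalIdeal A) k → ∃ r, Reg A r := by
  induction e with
  | zero =>
    intro A _ _ _ h k _
    exact ⟨0, reg_zero (max_eq_bot h)⟩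
  | succ e ih =>
    intro A _ _ _ h k hk
    by_cases hm : maximalIdeal A = ⊥
    · exact ⟨0, reg_zero hm⟩
    have hsoc : ∀ a : A, (∀ y ∈ maximalIdeal A, a * y = 0) → a = 0 := by
      intro a hy
      by_contra ha
      have hfree := free_of_soc ha hy k _ hk
      apply hm
      rw [eq_bot_iff, ← Module.annihilator_eq_bot.mpr
        (inferInstance : FaithfulSMul A (A ⧸ maximalIdeal A)), Ideal.annihilator_quotient]
    obtain ⟨x, hx, hx2, hxP⟩ := avoid (A := A) (S := associatedPrimes A A)
      (associatedPrimes.finite A A) (fun P hP => hP.isPrime) (by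
        intro P hP hle
        rw [AssociatedPrimes.mem_iff, isAssociatedPrime_iff] at hP
        obtain ⟨hPp, a, ha⟩ := hP
        have : a = 0 := hsoc a fun y hy => by
          have := hle hy
          rw [ha] at this
          rw [mul_comm]
          simpa [Submodule.mem_colon_singleton] using this
        subst this
        apply hPp.ne_top
        rw [ha, Ideal.eq_top_iff_one]
        simp [Submodule.mem_colon_singleton]) hm
    have hxA : IsSMulRegular A x := by
      have hnz : x ∈ nonZeroDivisors A := by
        by_contra hcon
        have : x ∈ (nonZeroDivisors A : Set A)ᶜ := hcon
        rw [← biUnion_associatedPrimes_eq_compl_nonZeroDivisors] at this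
        obtain ⟨P, hP, hxP'⟩ := Set.mem_iUnion₂.mp this
        exact hxP P hP hxP'
      intro a b hab
      have h1 : x * (a - b) = 0 := by rw [mul_sub, sub_eq_zero]; exact hab
      exact sub_eq_zero.mp ((mul_left_mem_nonZeroDivisors_eq_zero_iff hnz).mp h1)
    have hxm : IsSMulRegular (maximalIdeal A) x := fun a b hab => by
      apply Subtype.ext; exact hxA (congrArg Subtype.val hab)
    have hl := loc_quot hx
    have hk' : Pd A (maximalIdeal A) k := by
      rw [← pd_succ_iff (Submodule.subtype (maximalIdeal A)) (Submodule.mkQ (maximalIdeal A))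
        (Submodule.injective_subtype _) (Submodule.mkQ_surjective _)
        (LinearMap.exact_subtype_mkQ _)]
      exact pd_mono (Nat.le_succ k) hk
    rw [L12 hx hxA k _ hxm] at hk'
    obtain ⟨r, hr⟩ := ih _ (gen_quot h hx hx2) k (pd_residue hx hx2 hk')
    exact ⟨r+1, reg_lift hx hxA hr⟩
end S8
end

noncomputable section
namespace S8
open IsLocalRing

lemma gen_exists (A : Type) [CommRing A] [IsLocalRing A] [IsNoetherianRing A] : ∃ e, Gen A e := by
  obtain ⟨n, g, hg⟩ := Submodule.fg_iff_exists_fin_generating_family.mp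
    (IsNoetherian.noetherian (maximalIdeal A))
  exact ⟨n, g, hg⟩

lemma reg_loc {R : Type} [CommRing R] [IsLocalRing R] [IsNoetherianRing R] {n : ℕ} (h : Reg R n)
    (p : Ideal R) [p.IsPrime] : ∃ r : ℕ, Reg (Localization.AtPrime p) r ∧ p.height = r := by
  have : IsNoetherianRing (Localization.AtPrime p) :=
    IsLocalization.isNoetherianRing p.primeCompl _ inferInstance
  obtain ⟨e, he⟩ := gen_exists (Localization.AtPrime p)
  have hpd : Pd R (R ⧸ p) n := reg_pd n R h (R ⧸ p)
  have h1 : HasProjectiveDimensionLE (ModuleCat.of R (R ⧸ p)) n := hpd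
  have h2 := ModuleCat.localizedModule_hasProjectiveDimensionLE n p.primeCompl
    (ModuleCat.of R (R ⧸ p))
  have h3 : Pd (Localization.AtPrime p) (LocalizedModule p.primeCompl (R ⧸ p)) n := by
    refine (pd_congr (M := Shrink.{0} (LocalizedModule p.primeCompl (R ⧸ p))) ?_).mp h2
    exact Shrink.linearEquiv.{0} (Localization.AtPrime p) _
  have hmax : Submodule.localized' (Localization.AtPrime p) p.primeCompl
      (Algebra.linearMap R (Localization.AtPrime p)) p = maximalIdeal (Localization.AtPrime p) := by
    rw [Ideal.localized'_eq_map, Localization.AtPrime.map_eq_maximalIdeal]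
  have h4 : Pd (Localization.AtPrime p)
      (Localization.AtPrime p ⧸ maximalIdeal (Localization.AtPrime p)) n := by
    rw [← hmax]
    refine (pd_congr ?_).mp h3
    exact (IsLocalizedModule.linearEquiv p.primeCompl
      (LocalizedModule.mkLinearMap p.primeCompl (R ⧸ p))
      (Submodule.toLocalizedQuotient' (Localization.AtPrime p) p.primeCompl
        (Algebra.linearMap R (Localization.AtPrime p)) p)).extendScalarsOfIsLocalization
        p.primeCompl (Localization.AtPrime p)
  obtain ⟨r, hr⟩ := serre e _ he n h4
  refine ⟨r, hr, ?_⟩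
  have := IsLocalization.AtPrime.ringKrullDim_eq_height p (Localization.AtPrime p)
  rw [hr.2] at this
  exact_mod_cast this.symm
end S8
end

noncomputable section
namespace S8
universe u
open Limits Abelian

lemma bridge {R : Type u} [CommRing R] (M N : ModuleCat.{u} R) (n : ℕ) (hi : 1 ≤ n)
    (e : ((_root_.Ext R (ModuleCat.{u} R) n).obj (op M)).obj N) :
    ∃ ê : Abelian.Ext.{u} M N n, ∀ (M' : ModuleCat.{u} R) (f : M' ⟶ M) (s : R),
      s • ((Abelian.Ext.mk₀ f).comp ê (zero_add n)) = 0 →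
      s • ((((_root_.Ext R (ModuleCat.{u} R) n).map f.op).app N).hom e) = 0 := by
  obtain ⟨p, hp⟩ : ∃ p, p + 1 = n := ⟨n - 1, by omega⟩
  let G := ((linearYoneda R (ModuleCat.{u} R)).obj N).rightOp
  let P := projectiveResolution M
  let K := (G.mapHomologicalComplex (ComplexShape.down ℕ)).obj P.complex
  let a : (K.homology n).unop := (P.isoLeftDerivedObj G n).inv.unop.hom e
  have hea : (P.isoLeftDerivedObj G n).hom.unop.hom a = e := by
    have := congrArg Quiver.Hom.unop (P.isoLeftDerivedObj G n).hom_inv_id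
    exact ConcreteCategory.congr_hom this e
  obtain ⟨b, hb⟩ : ∃ b : (K.opcycles n).unop, (K.homologyι n).unop.hom b = a :=
    (ModuleCat.epi_iff_surjective (K.homologyι n).unop).1 inferInstance a
  let z : P.complex.X n ⟶ N := (K.pOpcycles n).unop.hom b
  have hz : P.complex.d (n+1) n ≫ z = 0 := by
    have := congrArg Quiver.Hom.unop (K.d_pOpcycles (n+1) n)
    exact ConcreteCategory.congr_hom this b
  refine ⟨P.extMk z (n+1) rfl hz, ?_⟩
  intro M' f s hs
  let P' := projectiveResolution M'
  let φ : ProjectiveResolution.Hom P' P f :=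
    { hom := ProjectiveResolution.lift f P' P
      hom_f_zero_comp_π_f_zero := ProjectiveResolution.lift_commutes_zero f P' P }
  let K' := (G.mapHomologicalComplex (ComplexShape.down ℕ)).obj P'.complex
  let Φ : K' ⟶ K := (G.mapHomologicalComplex (ComplexShape.down ℕ)).map φ.hom
  rw [ProjectiveResolution.mk₀_comp_extMk _ _ _ _ φ] at hs
  have hs' : P'.extMk (s • (φ.hom.f n ≫ z)) (n+1) rfl
      (by simp [← φ.hom.comm_assoc, hz]) = 0 := by
    have := P'.extMk_comp_mk₀ (φ.hom.f n ≫ z) (n+1) rfl (by simp [← φ.hom.comm_assoc, hz]) (s • 𝟙 N)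
    simp only [Linear.comp_smul, Category.comp_id] at this
    rw [← this]
    rw [← Abelian.Ext.smul_eq_comp_mk₀]; exact hs
  rw [P'.extMk_eq_zero_iff _ _ _ _ p hp] at hs'
  obtain ⟨g, hg⟩ := hs'
  let b' : (K'.opcycles n).unop := (HomologicalComplex.opcyclesMap Φ n).unop.hom b
  have h1 : (K'.pOpcycles n).unop.hom b' = φ.hom.f n ≫ z := by
    have := congrArg Quiver.Hom.unop (HomologicalComplex.p_opcyclesMap Φ n)
    exact ConcreteCategory.congr_hom this b
  have h2 : s • b' = (K'.fromOpcycles n p).unop.hom g := by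
    apply (ModuleCat.mono_iff_injective (K'.pOpcycles n).unop).1 inferInstance
    have := congrArg Quiver.Hom.unop (K'.p_fromOpcycles n p)
    refine Eq.trans ?_ (ConcreteCategory.congr_hom this g).symm
    refine (map_smul (K'.pOpcycles n).unop.hom s b').trans ?_
    rw [h1]
    exact hg.symm
  have h3 : (K'.homologyι n).unop.hom (s • b') = 0 := by
    rw [h2]
    have := congrArg Quiver.Hom.unop (K'.homologyι_comp_fromOpcycles n p)
    exact ConcreteCategory.congr_hom this g
  have h4 : (HomologicalComplex.homologyMap Φ n).unop.hom a = (K'.homologyι n).unop.hom b' := by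
    rw [← hb]
    have := congrArg Quiver.Hom.unop (HomologicalComplex.homologyι_naturality Φ n)
    exact ConcreteCategory.congr_hom this b
  have h5 : ((((_root_.Ext R (ModuleCat.{u} R) n).map f.op).app N).hom e) =
     (P'.isoLeftDerivedObj G n).hom.unop.hom ((HomologicalComplex.homologyMap Φ n).unop.hom a) := by
    conv_lhs => rw [← hea]
    have := congrArg Quiver.Hom.unop (ProjectiveResolution.isoLeftDerivedObj_hom_naturality f P' P
      φ.hom φ.hom_f_zero_comp_π_f_zero G n)
    exact ConcreteCategory.congr_hom this a
  rw [h5, h4]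
  refine ((map_smul (P'.isoLeftDerivedObj G n).hom.unop.hom s _).symm).trans ?_
  have h6 := (map_smul (K'.homologyι n).unop.hom s b').symm.trans h3
  exact (congrArg _ h6).trans (map_zero _)


lemma lc_rep {R : Type} [CommRing R] (I : Ideal R) (N : ModuleCat.{0} R) (n : ℕ)
    (hi : 1 ≤ n) (x : (localCohomology I n).obj N) :
    ∃ (t : ℕ) (ê : Abelian.Ext.{0} (ModuleCat.of R (R ⧸ I ^ t)) N n),
      ∀ (t' : ℕ) (h : t ≤ t') (s : R),
      s • ((Abelian.Ext.mk₀ (ModuleCat.ofHom (Submodule.mapQ (I ^ t') (I ^ t) LinearMap.id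
        (Ideal.pow_le_pow_right h)))).comp ê (zero_add n)) = 0 → s • x = 0 := by
  let D := localCohomology.diagram (localCohomology.idealPowersDiagram I) n
  let c : Cocone D := colimit.cocone D
  have hc : IsColimit c := colimit.isColimit D
  let ev := (evaluation (ModuleCat.{0} R) (ModuleCat.{0} R)).obj N
  have hc' : IsColimit (ev.mapCocone c) := isColimitOfPreserves ev hc
  have hf : IsFiltered (ℕᵒᵖᵒᵖ) := IsFiltered.of_equivalence (opOpEquivalence ℕ).symm
  obtain ⟨j, e, he⟩ := Concrete.isColimit_exists_rep (D ⋙ ev) hc' x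
  obtain ⟨ê, hê⟩ := bridge _ N n hi e
  refine ⟨j.unop.unop, ê, ?_⟩
  intro t' h s hs
  have h1 := hê _ _ s hs
  let w : j ⟶ op (op t') := (homOfLE h).op.op
  have h2 : ((D ⋙ ev).map w).hom (s • e) = 0 := (map_smul ((D ⋙ ev).map w).hom s e).trans h1
  have h3 := ConcreteCategory.congr_hom ((ev.mapCocone c).w w) (s • e)
  rw [← he]
  refine (map_smul ((ev.mapCocone c).ι.app j).hom s e).symm.trans ?_
  refine h3.symm.trans ?_
  refine (congrArg ((ev.mapCocone c).ι.app (op (op t'))).hom h2).trans (map_zero _)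

end S8
end

noncomputable section
namespace S8
open IsLocalRing

section
variable (A : Type) [CommRing A] [IsLocalRing A] [IsNoetherianRing A]

abbrev Cpl := AdicCompletion (maximalIdeal A) A

lemma cpl_noeth : IsNoetherianRing (Cpl A) := by
  obtain ⟨e, g, hg⟩ := gen_exists A
  let m := maximalIdeal A
  let P := MvPolynomial (Fin e) A
  let J : Ideal P := MvPolynomial.idealOfVars (Fin e) A
  let φ : P →+* A := (MvPolynomial.aeval g : P →ₐ[A] A).toRingHom
  have hφJ : J.map φ = m := by
    simp only [J, MvPolynomial.idealOfVars]
    rw [Ideal.map_span, show m = Ideal.span (Set.range g) from hg.symm, ← Set.range_comp]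
    congr 2
    funext i
    exact MvPolynomial.aeval_X g i
  let S := AdicCompletion J P
  have hSn : IsNoetherianRing S :=
    isNoetherianRing_of_ringEquiv (MvPowerSeries (Fin e) A)
      (MvPowerSeries.toAdicCompletionAlgEquiv (Fin e) A).toRingEquiv
  have hle : ∀ n, J ^ n ≤ (m ^ n).comap φ := fun n => by
    rw [← Ideal.map_le_iff_le_comap, Ideal.map_pow, hφJ]
  let f : (n : ℕ) → S →+* A ⧸ m ^ n := fun n =>
    (Ideal.quotientMap (m ^ n) φ (hle n)).comp (AdicCompletion.evalₐ J n : S →+* P ⧸ J ^ n)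
  have hf : ∀ {k n : ℕ} (hkn : k ≤ n), (Ideal.Quotient.factorPow m hkn).comp (f n) = f k := by
    intro k n hkn
    ext s
    obtain ⟨s, rfl⟩ := AdicCompletion.mk_surjective J P s
    simp only [f, RingHom.comp_apply, RingHom.coe_coe]
    rw [AdicCompletion.evalₐ_mk, AdicCompletion.evalₐ_mk, Ideal.quotientMap_mk, Ideal.quotientMap_mk]
    simp only [Ideal.Quotient.factorPow]
    rw [Ideal.Quotient.factor_mk, Ideal.Quotient.eq, ← map_sub]
    apply hle k
    have := s.2 hkn
    rw [SModEq.comm, SModEq.sub_mem] at this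
    simpa using this
  let F : S →+* Cpl A := AdicCompletion.liftRingHom m f hf
  have hF : F.comp (algebraMap P S) = (algebraMap A (Cpl A)).comp φ := by
    refine RingHom.ext fun s => AdicCompletion.ext_evalₐ fun n => ?_
    simp only [RingHom.comp_apply, F]
    rw [AdicCompletion.evalₐ_liftRingHom]
    simp only [f, RingHom.comp_apply, RingHom.coe_coe, AdicCompletion.algebraMap_apply]
    erw [AdicCompletion.evalₐ_of, AdicCompletion.evalₐ_of]
  have hJfg : J.FG := MvPolynomial.idealOfVars_fg _ _
  have hc := AdicCompletion.isAdicComplete_self J hJfg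
  have hmap : (J.map (algebraMap P S)).map F = maximalIdeal (Cpl A) := by
    rw [Ideal.map_map, hF, ← Ideal.map_map, hφJ, AdicCompletion.maximalIdeal_eq_map]
  have hH : IsHausdorff ((J.map (algebraMap P S)).map F) (Cpl A) := by
    rw [hmap]; infer_instance
  have hsurj : Function.Surjective F := by
    refine surjective_of_mk_map_comp_surjective (I := J.map (algebraMap P S)) F ?_
    intro y
    obtain ⟨y, rfl⟩ := Ideal.Quotient.mk_surjective y
    obtain ⟨z, hz⟩ := (AdicCompletion.residueField_map_bijective A).2 (residue _ y)
    obtain ⟨z, rfl⟩ := residue_surjective z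
    rw [IsLocalRing.ResidueField.map_residue] at hz
    refine ⟨algebraMap P S (MvPolynomial.C z), ?_⟩
    rw [RingHom.comp_apply, Ideal.Quotient.eq, hmap]
    have h1 : F (algebraMap P S (MvPolynomial.C z)) = algebraMap A (Cpl A) z := by
      have := RingHom.congr_fun hF (MvPolynomial.C z)
      rw [RingHom.comp_apply, RingHom.comp_apply] at this
      rw [this]
      congr 1
      exact MvPolynomial.aeval_C g z
    rw [h1]
    exact Ideal.Quotient.eq.mp hz
  exact isNoetherianRing_of_surjective S (Cpl A) F hsurj

end
end S8
end

noncomputable section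
namespace S8
open IsLocalRing

lemma closed_ideal (B : Type) [CommRing B] [IsLocalRing B] [IsNoetherianRing B] (J : Ideal B)
    (x : B) (hx : ∀ k : ℕ, x ∈ J ⊔ maximalIdeal B ^ k) : x ∈ J := by
  have : IsHausdorff (maximalIdeal B) (B ⧸ J) := inferInstance
  rw [← Ideal.Quotient.eq_zero_iff_mem]
  refine this.haus _ fun k => ?_
  rw [SModEq.zero]
  obtain ⟨a, ha, b, hb, rfl⟩ := Submodule.mem_sup.1 (hx k)
  rw [map_add, Ideal.Quotient.eq_zero_iff_mem.2 ha, zero_add]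
  have : (Ideal.Quotient.mk J b) = b • (1 : B ⧸ J) := by
    rw [Algebra.smul_def, mul_one]; rfl
  rw [this]
  exact Submodule.smul_mem_smul hb trivial

lemma art_quot (B : Type) [CommRing B] [IsLocalRing B] [IsNoetherianRing B] (k : ℕ) :
    IsArtinianRing (B ⧸ maximalIdeal B ^ k) := by
  rcases subsingleton_or_nontrivial (B ⧸ maximalIdeal B ^ k) with h | h
  · have : Finite (B ⧸ maximalIdeal B ^ k) := inferInstance
    infer_instance
  have := IsLocalRing.of_surjective' (Ideal.Quotient.mk (maximalIdeal B ^ k))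
    Ideal.Quotient.mk_surjective
  rw [isArtinianRing_iff_isNilpotent_maximalIdeal]
  refine ⟨k, ?_⟩
  have : maximalIdeal (B ⧸ maximalIdeal B ^ k) ≤
      (maximalIdeal B).map (Ideal.Quotient.mk (maximalIdeal B ^ k)) := by
    intro x hx
    obtain ⟨x, rfl⟩ := Ideal.Quotient.mk_surjective x
    refine Ideal.mem_map_of_mem _ ?_
    rw [mem_maximalIdeal, mem_nonunits_iff] at hx ⊢
    exact fun hu => hx (hu.map _)
  refine le_antisymm ((Ideal.pow_right_mono this k).trans ?_) bot_le
  rw [← Ideal.map_pow, Ideal.map_quotient_self]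
  exact le_rfl

lemma stab (B : Type) [CommRing B] [IsLocalRing B] [IsNoetherianRing B]
    (J : ℕ → Ideal B) (hJ : Antitone J) (k : ℕ) :
    ∃ j, ∀ j', j ≤ j' → J j ≤ J j' ⊔ maximalIdeal B ^ k := by
  have : IsArtinianRing (B ⧸ maximalIdeal B ^ k) :=
    art_quot B k
  let f : ℕ →o (Submodule (B ⧸ maximalIdeal B ^ k) (B ⧸ maximalIdeal B ^ k))ᵒᵈ :=
    ⟨fun j => OrderDual.toDual ((J j).map (Ideal.Quotient.mk (maximalIdeal B ^ k))), fun a b hab =>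
      OrderDual.toDual_le_toDual.2 (Ideal.map_mono (hJ hab))⟩
  obtain ⟨j, hj⟩ := IsArtinian.monotone_stabilizes f
  refine ⟨j, fun j' h => ?_⟩
  have h1 : (J j).map (Ideal.Quotient.mk (maximalIdeal B ^ k)) =
    (J j').map (Ideal.Quotient.mk (maximalIdeal B ^ k)) := hj j' h
  have h2 := congrArg (Ideal.comap (Ideal.Quotient.mk (maximalIdeal B ^ k))) h1
  rw [Ideal.comap_map_quotientMk, Ideal.comap_map_quotientMk] at h2
  rw [sup_comm, ← h2]
  exact le_sup_right

lemma chevalley (B : Type) [CommRing B] [IsLocalRing B] [IsNoetherianRing B]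
    [IsAdicComplete (maximalIdeal B) B]
    (J : ℕ → Ideal B) (hJ : Antitone J) (h0 : ⨅ j, J j = ⊥) (k0 : ℕ) :
    ∃ j, J j ≤ maximalIdeal B ^ k0 := by
  by_contra! hcon
  let m := maximalIdeal B
  let L : ℕ → Ideal B := fun k => ⨅ j, J j ⊔ m ^ k
  have hL : ∀ k, ∃ j, ∀ j', j ≤ j' → J j' ≤ L k := by
    intro k
    obtain ⟨j, hj⟩ := stab B J hJ k
    refine ⟨j, fun j' hj' => le_iInf fun i => ?_⟩
    rcases le_total j i with h | h
    · exact (hJ hj').trans (hj i h)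
    · exact (hJ (h.trans hj')).trans le_sup_left
  have hstep : ∀ k, ∀ x ∈ L k, ∃ y ∈ L (k+1), y - x ∈ m ^ k := by
    intro k x hx
    obtain ⟨j, hj⟩ := hL (k+1)
    have := (Submodule.mem_iInf _).1 hx j
    obtain ⟨a, ha, b, hb, rfl⟩ := Submodule.mem_sup.1 this
    exact ⟨a, hj j le_rfl ha, by simpa using (m ^ k).neg_mem hb⟩
  obtain ⟨j, hj⟩ := hL k0
  obtain ⟨x0, hx0, hx0'⟩ := Set.not_subset.1 (hcon j)
  choose g hg1 hg2 using hstep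
  let X : (l : ℕ) → {x : B // x ∈ L (k0 + l)} := fun l =>
    Nat.rec ⟨x0, hj j le_rfl hx0⟩ (fun l x => ⟨g (k0+l) x.1 x.2, hg1 _ _ _⟩) l
  have hX : ∀ l, (X (l+1)).1 - (X l).1 ∈ m ^ (k0 + l) := fun l => hg2 _ _ _
  have hX' : ∀ a b, a ≤ b → (X b).1 - (X a).1 ∈ m ^ (k0 + a) := by
    intro a b hab
    induction b, hab using Nat.le_induction with
    | base => simp
    | succ b hab ih =>
      have := (m ^ (k0 + a)).add_mem (Ideal.pow_le_pow_right (by omega) (hX b)) ih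
      simpa using this
  obtain ⟨x, hx⟩ := IsPrecomplete.prec' (I := m) (M := B) (fun l => (X l).1) (by
    intro a b hab
    rw [SModEq.sub_mem, smul_eq_mul, Ideal.mul_top, ← neg_sub]
    exact (m ^ a).neg_mem (Ideal.pow_le_pow_right (by omega) (hX' a b hab)))
  have hx' : ∀ l, (X l).1 - x ∈ m ^ l := fun l => by
    have := hx l
    rwa [SModEq.sub_mem, smul_eq_mul, Ideal.mul_top] at this
  have hxJ : ∀ j, x ∈ J j := by
    intro j
    refine closed_ideal B _ _ fun k => ?_
    have h1 := (Submodule.mem_iInf _).1 (X k).2 j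
    have h2 : (X k).1 ∈ J j ⊔ m ^ k :=
      (sup_le_sup_left (Ideal.pow_le_pow_right (Nat.le_add_left k k0)) (J j) :
        J j ⊔ m ^ (k0 + k) ≤ J j ⊔ m ^ k) h1
    have := (J j ⊔ m ^ k).sub_mem h2 ((le_sup_right : m ^ k ≤ J j ⊔ m ^ k) (hx' k))
    simpa using this
  have hx0 : x = 0 := by
    have : x ∈ ⨅ j, J j := (Submodule.mem_iInf _).2 hxJ
    rw [h0] at this
    simpa using this
  apply hx0'
  have h1 := hx' k0
  rw [hx0, sub_zero] at h1
  have h2 := hX' 0 k0 (Nat.zero_le _)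
  have := (m ^ k0).sub_mem h1 h2
  have h3 : (X 0).1 = x0 := rfl
  rw [sub_sub_cancel, h3] at this
  exact this

lemma chev_symb (B : Type) [CommRing B] [IsLocalRing B] [IsNoetherianRing B] [IsDomain B]
    [IsAdicComplete (maximalIdeal B) B] (Q : Ideal B) [Q.IsPrime] (k : ℕ) :
    ∃ j, ∀ x s : B, s ∉ Q → s * x ∈ Q ^ j → x ∈ maximalIdeal B ^ k := by
  let S := Localization.AtPrime Q
  have : IsNoetherianRing S := IsLocalization.isNoetherianRing Q.primeCompl S inferInstance
  obtain ⟨j, hj⟩ := chevalley B (fun j => (maximalIdeal S ^ j).comap (algebraMap B S))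
    (fun a b hab => Ideal.comap_mono (Ideal.pow_le_pow_right hab)) (by
      rw [← Ideal.comap_iInf, Ideal.iInf_pow_eq_bot_of_isLocalRing _ (maximalIdeal.isMaximal S).ne_top,
        ← RingHom.ker_eq_comap_bot]
      exact (RingHom.injective_iff_ker_eq_bot _).1
        (IsLocalization.injective S Q.primeCompl_le_nonZeroDivisors)) k
  refine ⟨j, fun x s hs hx => hj ?_⟩
  have hu : IsUnit (algebraMap B S s) := IsLocalization.map_units S (⟨s, hs⟩ : Q.primeCompl)
  have h1 : algebraMap B S (s * x) ∈ maximalIdeal S ^ j := by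
    rw [← Localization.AtPrime.map_eq_maximalIdeal, ← Ideal.map_pow]
    exact Ideal.mem_map_of_mem _ hx
  rw [map_mul] at h1
  exact (Ideal.unit_mul_mem_iff_mem _ hu).1 h1

section
variable (A : Type) [CommRing A] [IsLocalRing A] [IsNoetherianRing A]

lemma cpl_reg (e : ℕ) (h : Reg A e) : Reg (Cpl A) e := by
  have := cpl_noeth A
  obtain ⟨⟨g, hg⟩, hd⟩ := h
  have hgen : Gen (Cpl A) e := ⟨fun i => algebraMap A _ (g i), by
    have := congrArg (Ideal.map (algebraMap A (Cpl A))) hg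
    rw [AdicCompletion.maximalIdeal_eq_map, ← this, Ideal.map_span, ← Set.range_comp]; rfl⟩
  refine ⟨hgen, le_antisymm (gen_dim hgen) ?_⟩
  have : (maximalIdeal (Cpl A)).LiesOver (maximalIdeal A) :=
    ⟨by
      have h1 : IsLocalHom (algebraMap A (Cpl A)) := inferInstance
      ext x
      rw [Ideal.mem_under]
      simp only [mem_maximalIdeal, mem_nonunits_iff, isUnit_map_iff]⟩
  have := Ideal.height_eq_height_add_of_liesOver_of_hasGoingDown (maximalIdeal A)
    (maximalIdeal (Cpl A))
  rw [← hd, ← maximalIdeal_height_eq_ringKrullDim, ← maximalIdeal_height_eq_ringKrullDim, this]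
  exact_mod_cast le_self_add

lemma F3 (e : ℕ) (h : Reg A e) (q : Ideal A) [q.IsPrime] (k : ℕ) :
    ∃ j, ∀ x s : A, s ∉ q → s * x ∈ q ^ j → x ∈ maximalIdeal A ^ k := by
  have := cpl_noeth A
  have : IsDomain (Cpl A) := reg_domain e (Cpl A) (cpl_reg A e h)
  have : Module.FaithfullyFlat A (Cpl A) := Module.FaithfullyFlat.of_flat_of_isLocalHom
  obtain ⟨⟨Q, hQ⟩, hQq⟩ := PrimeSpectrum.comap_surjective_of_faithfullyFlat (A := A) (B := Cpl A)
    ⟨q, inferInstance⟩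
  have hQq : Q.comap (algebraMap A (Cpl A)) = q := congrArg PrimeSpectrum.asIdeal hQq
  obtain ⟨j, hj⟩ := chev_symb (Cpl A) Q k
  refine ⟨j, fun x s hs hx => ?_⟩
  have h1 := hj (algebraMap A _ x) (algebraMap A _ s) (fun hh => hs (by rw [← hQq]; exact hh)) (by
    rw [← map_mul]
    have : q.map (algebraMap A (Cpl A)) ^ j ≤ Q ^ j :=
      Ideal.pow_right_mono (Ideal.map_le_iff_le_comap.2 hQq.ge) j
    apply this
    rw [← Ideal.map_pow]
    exact Ideal.mem_map_of_mem _ hx)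
  rw [AdicCompletion.maximalIdeal_eq_map, ← Ideal.map_pow, ← Ideal.mem_comap] at h1
  rwa [Ideal.comap_map_eq_self_of_faithfullyFlat] at h1

end
end S8
end

noncomputable section
namespace S8
open IsLocalRing

section
open Abelian
variable {R : Type} [CommRing R] [IsNoetherianRing R] (p : Ideal R) [p.IsPrime]

lemma ext_tors_zero (M F : ModuleCat.{0} R) [Module.Finite R M] [Module.Finite R F] [Module.Projective R F]
    (π : F →ₗ[R] M) (hπ : Function.Surjective π)
    (h : Module.Projective (Localization.AtPrime p) (LocalizedModule p.primeCompl M)) (N : ModuleCat.{0} R)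
    (j : ℕ) (e : Ext.{0} M N (j+1)) : ∃ s ∉ p, s • e = 0 := by
  have : Projective F := (IsProjective.iff_projective (R := R) F).mp inferInstance
  have hs : Function.Surjective (LocalizedModule.map p.primeCompl π) :=
    LocalizedModule.map_surjective _ _ hπ
  obtain ⟨σ, hσ⟩ := Module.projective_lifting_property (LocalizedModule.map p.primeCompl π)
    LinearMap.id hs
  have : Module.FinitePresentation R M := Module.finitePresentation_of_finite R M
  obtain ⟨ψ, s, hψ⟩ := Module.FinitePresentation.exists_lift_of_isLocalizedModule p.primeCompl
    (LocalizedModule.mkLinearMap p.primeCompl F)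
    ((σ.restrictScalars R).comp (LocalizedModule.mkLinearMap p.primeCompl M))
  obtain ⟨s', hs'⟩ := Module.Finite.exists_smul_of_comp_eq_of_isLocalizedModule p.primeCompl
    (LocalizedModule.mkLinearMap p.primeCompl M) (π.comp ψ) (s • LinearMap.id) (by
      ext m
      have h1 := LinearMap.congr_fun hψ m
      have h2 := congrArg (LocalizedModule.map p.primeCompl π) h1
      have h3 : ∀ f, LocalizedModule.map p.primeCompl π (LocalizedModule.mkLinearMap p.primeCompl F f)
        = LocalizedModule.mkLinearMap p.primeCompl M (π f) := fun f => by
          simp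
      simp only [LinearMap.comp_apply] at h2 ⊢
      rw [h3] at h2
      rw [h2]
      have h4 := LinearMap.congr_fun hσ (LocalizedModule.mkLinearMap p.primeCompl M m)
      have h5 : LocalizedModule.map p.primeCompl π (s.1 • σ (LocalizedModule.mkLinearMap p.primeCompl M m)) =
        s.1 • LocalizedModule.mkLinearMap p.primeCompl M m := by
        rw [LinearMap.map_smul_of_tower]
        exact congrArg _ h4
      refine Eq.trans h5 ?_
      exact (LinearMap.map_smul (LocalizedModule.mkLinearMap p.primeCompl M) s.1 m).symm)
  refine ⟨s'.1 * s.1, p.primeCompl.mul_mem s'.2 s.2, ?_⟩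
  have h1 : (s'.1 * s.1) • 𝟙 M = ModuleCat.ofHom (s'.1 • ψ) ≫ ModuleCat.ofHom π := by
    ext m
    have := LinearMap.congr_fun hs' m
    have h2 : s'.1 • π (ψ m) = s'.1 • s.1 • m := this
    have h3 : (s'.1 * s.1) • m = π (s'.1 • ψ m) := by
      rw [mul_smul, ← h2, map_smul]
    exact h3
  have h2 : (s'.1 * s.1) • e = (Ext.mk₀ ((s'.1 * s.1) • 𝟙 M)).comp e (zero_add _) := by
    rw [Ext.mk₀_smul, Ext.smul_comp, Ext.mk₀_id_comp]
  rw [h2, h1, ← Ext.mk₀_comp_mk₀_assoc, Ext.eq_zero_of_projective ((Ext.mk₀ _).comp e (zero_add _)), Ext.comp_zero]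

lemma ext_tors (N : ModuleCat.{0} R) (k : ℕ) : ∀ (M : ModuleCat.{0} R) [Module.Finite R M],
    Pd (Localization.AtPrime p) (LocalizedModule p.primeCompl M) k →
    ∀ j (e : Ext.{0} M N (j+1)), k ≤ j → ∃ s ∉ p, s • e = 0 := by
  induction k with
  | zero =>
    intro M _ h j e _
    obtain ⟨n, π, hπ⟩ := Module.Finite.exists_fin' R M
    have : Module.Finite R (ModuleCat.of R (Fin n → R)) := inferInstanceAs (Module.Finite R (Fin n → R))
    have : Module.Projective R (ModuleCat.of R (Fin n → R)) :=
      inferInstanceAs (Module.Projective R (Fin n → R))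
    exact ext_tors_zero p M (ModuleCat.of R (Fin n → R)) π hπ (pd_zero_iff.1 h) N j e
  | succ k ih =>
    intro M _ h j e hj
    obtain ⟨n, π, hπ⟩ := Module.Finite.exists_fin' R M
    have hS : π.shortComplexKer.ShortExact := LinearMap.shortExact_shortComplexKer hπ
    have hF : Projective (ModuleCat.of R (Fin n → R)) :=
      (IsProjective.iff_projective (R := R) (Fin n → R)).mp inferInstance
    have hF2 : Projective π.shortComplexKer.X₂ := hF
    have hK : Pd (Localization.AtPrime p) (LocalizedModule p.primeCompl (LinearMap.ker π)) k := by
      refine (pd_succ_iff (F := LocalizedModule p.primeCompl (Fin n → R))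
        (LocalizedModule.map p.primeCompl (LinearMap.ker π).subtype)
        (LocalizedModule.map p.primeCompl π) (LocalizedModule.map_injective _ _ (Submodule.injective_subtype _))
        (LocalizedModule.map_surjective _ _ hπ) ?_ k).1 h
      exact LocalizedModule.map_exact p.primeCompl _ _ (LinearMap.exact_subtype_ker_map π)
    have : Module.Finite R π.shortComplexKer.X₁ := inferInstanceAs (Module.Finite R (LinearMap.ker π))
    obtain ⟨j, rfl⟩ : ∃ j', j = j' + 1 := ⟨j - 1, by omega⟩
    obtain ⟨e', he'⟩ := Ext.contravariant_sequence_exact₃ hS (Y := N) (n₁ := j+1+1) e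
      (Ext.eq_zero_of_projective (P := π.shortComplexKer.X₂) _) (n₀ := j+1) (by omega)
    obtain ⟨s, hs, h0⟩ := ih π.shortComplexKer.X₁ hK j e' (by omega)
    refine ⟨s, hs, ?_⟩
    rw [← he', ← Ext.comp_smul, h0, Ext.comp_zero]
end
end S8
end

noncomputable section
namespace S8
open IsLocalRing

section
open Abelian
variable {R : Type} [CommRing R] [IsNoetherianRing R] (p : Ideal R) [p.IsPrime]

lemma nak_tors {E : Type} [AddCommGroup E] [Module R E] [Module.Finite R E] {x : R} (hx : x ∈ p)
    (h : ∀ e : E, ∃ s ∉ p, ∃ e' : E, s • e = x • e') (e : E) : ∃ s ∉ p, s • e = 0 := by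
  let L := LocalizedModule p.primeCompl E
  let Rp := Localization.AtPrime p
  have hfin : Module.Finite Rp L :=
    Module.Finite.of_isLocalizedModule p.primeCompl (LocalizedModule.mkLinearMap p.primeCompl E)
  have hbot : (⊤ : Submodule Rp L) = ⊥ := by
    refine Submodule.eq_bot_of_le_smul_of_le_jacobson_bot (maximalIdeal Rp) ⊤ hfin.1 ?_
      (by rw [IsLocalRing.jacobson_eq_maximalIdeal _ bot_ne_top])
    rintro y -
    induction y using LocalizedModule.induction_on with
    | h e t =>
    obtain ⟨s, hs, e', he⟩ := h e
    have h1 : (LocalizedModule.mk e t : L) =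
        (algebraMap R Rp x) • (LocalizedModule.mk e' (⟨s, hs⟩ * t) : L) := by
      rw [algebraMap_smul, LocalizedModule.smul'_mk, LocalizedModule.mk_eq]
      refine ⟨1, ?_⟩
      rw [one_smul, one_smul, mul_comm, mul_smul, ← he]
      rfl
    rw [h1]
    refine Submodule.smul_mem_smul ?_ trivial
    rw [← Localization.AtPrime.map_eq_maximalIdeal]
    exact Ideal.mem_map_of_mem _ hx
  have h0 : (LocalizedModule.mk e 1 : L) = LocalizedModule.mk 0 1 := by
    have : (LocalizedModule.mk e 1 : L) ∈ (⊤ : Submodule Rp L) := trivial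
    rw [hbot] at this
    rw [LocalizedModule.zero_mk]
    exact this
  obtain ⟨u, hu⟩ := LocalizedModule.mk_eq.1 h0
  refine ⟨u.1, u.2, ?_⟩
  rw [one_smul, one_smul, smul_zero] at hu
  exact hu

lemma ext_reg_tors (N Y : ModuleCat.{0} R) [Module.Finite R N] [Module.Finite R Y] {x : R}
    (hx : x ∈ p) (hreg : IsSMulRegular N x) (j : ℕ)
    (h : ∀ e : Ext.{0} (N.smulShortComplex x).X₃ Y (j+1), ∃ s ∉ p, s • e = 0)
    (e : Ext.{0} N Y j) : ∃ s ∉ p, s • e = 0 := by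
  have hS : (N.smulShortComplex x).ShortExact := hreg.smulShortComplex_shortExact
  refine nak_tors p hx (fun e => ?_) e
  obtain ⟨s, hs, h0⟩ := h (hS.extClass.comp e (add_comm 1 j))
  obtain ⟨e', he'⟩ := Ext.contravariant_sequence_exact₁ hS (Y := Y) (s • e) (add_comm 1 j) (by
    exact (Ext.comp_smul _ _ _ _).trans h0)
  refine ⟨s, hs, e', ?_⟩
  rw [← he']
  have h2 : ∀ e' : Ext.{0} N Y j, (Ext.mk₀ (x • 𝟙 N)).comp e' (zero_add j) = x • e' := fun e' => by
    rw [Ext.mk₀_smul, Ext.smul_comp, Ext.mk₀_id_comp]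
  exact h2 e'

end

section
variable {R : Type} [CommRing R] [IsNoetherianRing R] (p : Ideal R) [hp : p.IsPrime]

/-- saturation -/
def Tt (J : Ideal R) : Ideal R where
  carrier := {x | ∃ s ∉ p, ∃ k, ∀ y ∈ p ^ k, s * (y * x) ∈ J}
  zero_mem' := ⟨1, (Ideal.ne_top_iff_one p).1 hp.ne_top, 0, by simp⟩
  add_mem' := by
    rintro a b ⟨s, hs, k, h⟩ ⟨s', hs', k', h'⟩
    refine ⟨s * s', p.primeCompl.mul_mem hs hs', k + k', fun y hy => ?_⟩
    have h1 := h y (Ideal.pow_le_pow_right (Nat.le_add_right _ _) hy)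
    have h2 := h' y (Ideal.pow_le_pow_right (Nat.le_add_left _ _) hy)
    have := J.add_mem (J.mul_mem_left s' h1) (J.mul_mem_left s h2)
    convert this using 1
    ring
  smul_mem' := by
    rintro c a ⟨s, hs, k, h⟩
    refine ⟨s, hs, k, fun y hy => ?_⟩
    have := J.mul_mem_left c (h y hy)
    convert this using 1
    simp only [smul_eq_mul]; ring

lemma mem_Tt {J : Ideal R} {x : R} : x ∈ Tt p J ↔ ∃ s ∉ p, ∃ k, ∀ y ∈ p ^ k, s * (y * x) ∈ J :=
  Iff.rfl

lemma le_Tt (J : Ideal R) : J ≤ Tt p J := fun x hx =>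
  ⟨1, (Ideal.ne_top_iff_one p).1 hp.ne_top, 0, fun y _ => by
    rw [one_mul]; exact J.mul_mem_left _ hx⟩

lemma Tt_mono {J J' : Ideal R} (h : J ≤ J') : Tt p J ≤ Tt p J' :=
  fun _ ⟨s, hs, k, hx⟩ => ⟨s, hs, k, fun y hy => h (hx y hy)⟩

lemma unif (N J : Ideal R) (h : ∀ x ∈ N, ∃ s ∉ p, s * x ∈ J) : ∃ s ∉ p, ∀ x ∈ N, s * x ∈ J := by
  classical
  obtain ⟨G, hG⟩ := (IsNoetherian.noetherian N : N.FG)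
  have : ∀ g : R, ∃ s ∉ p, g ∈ G → s * g ∈ J := fun g => by
    by_cases hg : g ∈ G
    · obtain ⟨s, hs, h1⟩ := h g (hG ▸ Submodule.subset_span hg)
      exact ⟨s, hs, fun _ => h1⟩
    · exact ⟨1, (Ideal.ne_top_iff_one p).1 hp.ne_top, fun h => absurd h hg⟩
  choose s hs1 hs2 using this
  refine ⟨∏ g ∈ G, s g, p.primeCompl.prod_mem fun g _ => hs1 g, fun x hx => ?_⟩
  rw [← hG] at hx
  induction hx using Submodule.span_induction with
  | mem g hg =>
    rw [← Finset.mul_prod_erase G s hg, mul_comm (s g), mul_assoc]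
    exact J.mul_mem_left _ (hs2 g hg)
  | zero => simp
  | add a b _ _ ha hb => rw [mul_add]; exact J.add_mem ha hb
  | smul c a _ ha =>
    rw [smul_eq_mul, mul_left_comm]; exact J.mul_mem_left _ ha

/-- uniform exponents for the saturation -/
lemma Tt_unif (J : Ideal R) : ∃ s ∉ p, ∃ k, ∀ x ∈ p ^ k * Tt p J, s * x ∈ J := by
  have hk : ∃ k, ∀ x ∈ Tt p J, ∃ s ∉ p, ∀ y ∈ p ^ k, s * (y * x) ∈ J := by
    obtain ⟨G, hG⟩ := (IsNoetherian.noetherian (Tt p J) : (Tt p J).FG)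
    have : ∀ g : R, ∃ k, g ∈ G → ∃ s ∉ p, ∀ y ∈ p ^ k, s * (y * g) ∈ J := fun g => by
      by_cases hg : g ∈ G
      · obtain ⟨s, hs, k, h1⟩ : g ∈ Tt p J := hG ▸ Submodule.subset_span hg
        exact ⟨k, fun _ => ⟨s, hs, h1⟩⟩
      · exact ⟨0, fun h => absurd h hg⟩
    choose k hk using this
    refine ⟨G.sup k, fun x hx => ?_⟩
    rw [← hG] at hx
    induction hx using Submodule.span_induction with
    | mem g hg =>
      obtain ⟨s, hs, h⟩ := hk g hg
      exact ⟨s, hs, fun y hy => h y (Ideal.pow_le_pow_right (Finset.le_sup hg) hy)⟩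
    | zero => exact ⟨1, (Ideal.ne_top_iff_one p).1 hp.ne_top, by simp⟩
    | add a b _ _ ha hb =>
      obtain ⟨s, hs, h⟩ := ha
      obtain ⟨s', hs', h'⟩ := hb
      refine ⟨s * s', p.primeCompl.mul_mem hs hs', fun y hy => ?_⟩
      have := J.add_mem (J.mul_mem_left s' (h y hy)) (J.mul_mem_left s (h' y hy))
      convert this using 1
      ring
    | smul c a _ ha =>
      obtain ⟨s, hs, h⟩ := ha
      refine ⟨s, hs, fun y hy => ?_⟩
      have := J.mul_mem_left c (h y hy)
      convert this using 1
      simp only [smul_eq_mul]; ring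
  obtain ⟨k, hk⟩ := hk
  obtain ⟨s, hs, h⟩ := unif p (p ^ k * Tt p J) J (fun x hx => by
    refine Submodule.mul_induction_on hx (fun y hy a ha => ?_) (fun a b ha hb => ?_)
    · obtain ⟨s, hs, h⟩ := hk a ha
      exact ⟨s, hs, h y hy⟩
    · obtain ⟨s, hs, h⟩ := ha
      obtain ⟨s', hs', h'⟩ := hb
      refine ⟨s * s', p.primeCompl.mul_mem hs hs', ?_⟩
      have := J.add_mem (J.mul_mem_left s' h) (J.mul_mem_left s h')
      convert this using 1
      ring)
  exact ⟨s, hs, k, h⟩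

lemma reg_elt (J : Ideal R) : ∃ x ∈ p, IsSMulRegular (R ⧸ Tt p J) x := by
  have hfin := associatedPrimes.finite R (R ⧸ Tt p J)
  by_contra! hcon
  have hsub : (p : Set R) ⊆ ⋃ P ∈ (hfin.toFinset : Set (Ideal R)), (P : Set R) := by
    intro x hx
    have h1 := hcon x hx
    rw [isSMulRegular_iff_right_eq_zero_of_smul] at h1
    push Not at h1
    obtain ⟨m, hm, hm0⟩ := h1
    have h2 : x ∈ {r : R | ∃ x : R ⧸ Tt p J, x ≠ 0 ∧ r • x = 0} := ⟨m, hm0, hm⟩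
    rw [← biUnion_associatedPrimes_eq_zero_divisors] at h2
    simpa using h2
  obtain ⟨P, hP, hpP⟩ := (Ideal.subset_union_prime (f := fun P : Ideal R => P) ⊥ ⊥ (by
    intro i hi _ _
    exact ((hfin.mem_toFinset).1 hi).isPrime)).1 hsub
  have hP' : IsAssociatedPrime P (R ⧸ Tt p J) := (hfin.mem_toFinset).1 hP
  obtain ⟨hPp, m, hm⟩ := isAssociatedPrime_iff.1 hP'
  obtain ⟨a, rfl⟩ := Ideal.Quotient.mk_surjective m
  have hmem : ∀ r, r ∈ P ↔ r * a ∈ Tt p J := by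
    intro r
    rw [hm, Submodule.mem_colon_singleton, Submodule.mem_bot, Algebra.smul_def,
      Ideal.Quotient.algebraMap_eq, ← map_mul, Ideal.Quotient.eq_zero_iff_mem]
  obtain ⟨s, hs, k, h⟩ := Tt_unif p J
  have ha : a ∈ Tt p J := by
    refine ⟨s, hs, k + 1, fun y hy => h _ ?_⟩
    rw [pow_succ] at hy
    refine Submodule.mul_induction_on hy (fun y hy z hz => ?_) (fun u v hu hv => ?_)
    · rw [mul_assoc]
      exact Ideal.mul_mem_mul hy ((hmem z).1 (hpP hz))
    · rw [add_mul]; exact Ideal.add_mem _ hu hv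
  exact hPp.ne_top ((Ideal.eq_top_iff_one P).2 ((hmem 1).2 (by rwa [one_mul])))

lemma sym_cont {r : ℕ} (hr : Reg (Localization.AtPrime p) r) (q : Ideal R) [hq : q.IsPrime]
    (hqp : q ≤ p) (K : ℕ) : ∃ j, ∀ x s : R, s ∉ q → s * x ∈ q ^ j → ∃ s1 ∉ p, s1 * x ∈ p ^ K := by
  let Rp := Localization.AtPrime p
  have : IsNoetherianRing Rp := IsLocalization.isNoetherianRing p.primeCompl _ inferInstance
  have hdis : Disjoint (p.primeCompl : Set R) (q : Set R) :=
    Set.disjoint_left.2 fun x hx hxq => hx (hqp hxq)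
  have : (q.map (algebraMap R Rp)).IsPrime :=
    IsLocalization.isPrime_of_isPrime_disjoint p.primeCompl Rp q hq hdis
  obtain ⟨j, hj⟩ := F3 Rp r hr (q.map (algebraMap R Rp)) K
  refine ⟨j, fun x s hs hx => ?_⟩
  have h1 := hj (algebraMap R Rp x) (algebraMap R Rp s) (fun hh => by
    obtain ⟨u, hu, hu'⟩ := (IsLocalization.algebraMap_mem_map_algebraMap_iff p.primeCompl Rp q s).1 hh
    rcases hq.mem_or_mem hu' with h | h
    · exact hu (hqp h)
    · exact hs h) (by
    rw [← map_mul, ← Ideal.map_pow]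
    exact Ideal.mem_map_of_mem _ hx)
  rw [← Localization.AtPrime.map_eq_maximalIdeal, ← Ideal.map_pow] at h1
  exact (IsLocalization.algebraMap_mem_map_algebraMap_iff p.primeCompl Rp _ x).1 h1

lemma key_alg {r : ℕ} (hr : Reg (Localization.AtPrime p) r) (I q : Ideal R) [hq : q.IsPrime]
    (hIq : I ≤ q) (hqp : q < p) (t : ℕ) :
    ∃ t', t ≤ t' ∧ ∃ s ∉ p, ∀ x ∈ Tt p (I ^ t'), s * x ∈ I ^ t := by
  obtain ⟨s0, hs0, k0, h0⟩ := Tt_unif p (I ^ t)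
  obtain ⟨c, hc⟩ := Ideal.exists_pow_inf_eq_pow_smul p (Tt p (I ^ t))
  obtain ⟨j, hj⟩ := sym_cont p hr q hqp.le (c + k0)
  refine ⟨max t j, le_max_left _ _, unif p _ _ fun x hx => ?_⟩
  obtain ⟨y, hy, hyq⟩ := Set.exists_of_ssubset hqp
  have hxt : x ∈ Tt p (I ^ t) := Tt_mono p (Ideal.pow_le_pow_right (le_max_left _ _)) hx
  obtain ⟨s, hs, k, hk⟩ := hx
  have h1 : (s * y ^ k) * x ∈ q ^ j := by
    rw [mul_assoc]
    have := hk (y ^ k) (Ideal.pow_mem_pow hy k)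
    exact (Ideal.pow_right_mono hIq j) (Ideal.pow_le_pow_right (le_max_right _ _) this)
  obtain ⟨s1, hs1, h2⟩ := hj x (s * y ^ k) (fun hh => by
    rcases hq.mem_or_mem hh with h | h
    · exact hs (hqp.le h)
    · exact hyq (hq.mem_of_pow_mem k h)) h1
  have h3 : s1 * x ∈ p ^ (c + k0) • (⊤ : Submodule R R) ⊓ Tt p (I ^ t) := by
    refine ⟨?_, Ideal.mul_mem_left _ _ hxt⟩
    rw [smul_eq_mul, Ideal.mul_top]; exact h2
  rw [hc (c + k0) (Nat.le_add_right _ _), Nat.add_sub_cancel_left] at h3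
  have h4 : s1 * x ∈ p ^ k0 * Tt p (I ^ t) := (Ideal.mul_mono_right inf_le_right : p ^ k0 * _ ≤ p ^ k0 * Tt p (I ^ t)) h3
  refine ⟨s0 * s1, p.primeCompl.mul_mem hs0 hs1, ?_⟩
  rw [mul_assoc]
  exact h0 _ h4

end
end S8
end

noncomputable section
namespace S8
open IsLocalRing

section
open Abelian
variable {R : Type} [CommRing R] [IsNoetherianRing R] (p : Ideal R) [hp : p.IsPrime]

/-- the transition map between quotients by powers -/
abbrev trans (I : Ideal R) {t t' : ℕ} (h : t ≤ t') :
    ModuleCat.of R (R ⧸ I ^ t') ⟶ ModuleCat.of R (R ⧸ I ^ t) :=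
  ModuleCat.ofHom (Submodule.mapQ (I ^ t') (I ^ t) LinearMap.id (Ideal.pow_le_pow_right h))

lemma ext_tors_high {r : ℕ} (hr : Reg (Localization.AtPrime p) r) (M N : ModuleCat.{0} R)
    [Module.Finite R M] (j : ℕ) (hj : r ≤ j) (e : Ext.{0} M N (j+1)) : ∃ s ∉ p, s • e = 0 := by
  have : IsNoetherianRing (Localization.AtPrime p) :=
    IsLocalization.isNoetherianRing p.primeCompl _ inferInstance
  have : Module.Finite (Localization.AtPrime p) (LocalizedModule p.primeCompl M) :=
    Module.Finite.of_isLocalizedModule p.primeCompl (LocalizedModule.mkLinearMap p.primeCompl M)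
  exact ext_tors p N r M (reg_pd r _ hr _) j e hj

lemma top_step {r : ℕ} (hr : Reg (Localization.AtPrime p) r) (I q : Ideal R) [hq : q.IsPrime]
    (hIq : I ≤ q) (hqp : q < p) (t : ℕ) (N : ModuleCat.{0} R) [Module.Finite R N]
    (e : Ext.{0} (ModuleCat.of R (R ⧸ I ^ t)) N r) :
    ∃ (t' : ℕ) (h : t ≤ t'), ∃ s ∉ p, s • (Ext.mk₀ (trans I h)).comp e (zero_add r) = 0 := by
  obtain ⟨t', h, s, hs, hT⟩ := key_alg p hr I q hIq hqp t
  refine ⟨t', h, ?_⟩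
  let π : (R ⧸ I ^ t') →ₗ[R] (R ⧸ Tt p (I ^ t')) :=
    Submodule.mapQ (I ^ t') (Tt p (I ^ t')) LinearMap.id (le_Tt p _)
  have hπ : Function.Surjective π := by
    intro y
    obtain ⟨y, rfl⟩ := Submodule.Quotient.mk_surjective _ y
    exact ⟨Submodule.Quotient.mk y, rfl⟩
  have hS : π.shortComplexKer.ShortExact := LinearMap.shortExact_shortComplexKer hπ
  let f : π.shortComplexKer.X₂ ⟶ ModuleCat.of R (R ⧸ I ^ t) := trans I h
  have h0 : s • (π.shortComplexKer.f ≫ f) = 0 := by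
    ext y
    obtain ⟨y, hy⟩ : LinearMap.ker π := y
    obtain ⟨y, rfl⟩ := Submodule.Quotient.mk_surjective _ y
    have hy' : y ∈ Tt p (I ^ t') := by
      have h1 : (Submodule.Quotient.mk y : R ⧸ Tt p (I ^ t')) = 0 := hy
      rwa [Submodule.Quotient.mk_eq_zero] at h1
    have h2 : (Submodule.Quotient.mk (s * y) : R ⧸ I ^ t) = 0 :=
      (Submodule.Quotient.mk_eq_zero _).2 (hT y hy')
    exact h2
  obtain ⟨e1, he1⟩ := Ext.contravariant_sequence_exact₂ hS (Y := N)
    (s • (Ext.mk₀ f).comp e (zero_add r)) (by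
      rw [Ext.comp_smul, Ext.mk₀_comp_mk₀_assoc, ← Ext.smul_comp, ← Ext.mk₀_smul, h0, Ext.mk₀_zero,
        Ext.zero_comp])
  obtain ⟨x, hx, hreg⟩ := reg_elt p (I ^ t')
  have htor : ∃ s ∉ p, s • e1 = 0 := by
    have : Module.Finite R (ModuleCat.of R (R ⧸ Tt p (I ^ t'))) :=
      inferInstanceAs (Module.Finite R (R ⧸ Tt p (I ^ t')))
    refine ext_reg_tors p (ModuleCat.of R (R ⧸ Tt p (I ^ t'))) N hx hreg r (fun e2 => ?_) e1
    have : Module.Finite R ((ModuleCat.of R (R ⧸ Tt p (I ^ t'))).smulShortComplex x).X₃ :=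
      Module.Finite.of_surjective (M := R ⧸ Tt p (I ^ t')) (Submodule.mkQ _)
        (Submodule.mkQ_surjective _)
    exact ext_tors_high p hr _ N r le_rfl e2
  obtain ⟨s', hs', h1⟩ := htor
  refine ⟨s' * s, p.primeCompl.mul_mem hs' hs, ?_⟩
  rw [mul_smul]
  have h2 : s' • (s • (Ext.mk₀ f).comp e (zero_add r)) = 0 := by
    rw [← he1, ← Ext.comp_smul, h1, Ext.comp_zero]
  exact h2

lemma outside (I : Ideal R) (hI : ¬ I ≤ p) (t r : ℕ) (N : ModuleCat.{0} R)
    (e : Ext.{0} (ModuleCat.of R (R ⧸ I ^ t)) N r) : ∃ s ∉ p, s • e = 0 := by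
  obtain ⟨s, hs, hsp⟩ := Set.not_subset.1 hI
  refine ⟨s ^ t, fun h => hsp (hp.mem_of_pow_mem t h), ?_⟩
  have h0 : (s ^ t) • 𝟙 (ModuleCat.of R (R ⧸ I ^ t)) = 0 := by
    ext y
    have h2 : (Submodule.Quotient.mk (s ^ t * 1) : R ⧸ I ^ t) = 0 :=
      (Submodule.Quotient.mk_eq_zero _).2 (Ideal.mul_mem_right _ _ (Ideal.pow_mem_pow hs t))
    exact h2
  have h2 : (s ^ t) • e = (Ext.mk₀ ((s ^ t) • 𝟙 _)).comp e (zero_add _) := by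
    rw [Ext.mk₀_smul, Ext.smul_comp, Ext.mk₀_id_comp]
  rw [h2, h0, Ext.mk₀_zero, Ext.zero_comp]

lemma main_tors {r : ℕ} (hr : Reg (Localization.AtPrime p) r) (I : Ideal R) (i : ℕ) (hi : 1 ≤ i)
    (hri : r ≤ i) (hmin : r = i → ∀ q ∈ I.minimalPrimes, q ≠ p)
    (x : (localCohomology I i).obj (ModuleCat.of R R)) : ∃ s ∉ p, s • x = 0 := by
  obtain ⟨t, e, he⟩ := lc_rep I (ModuleCat.of R R) i hi x
  have hfin : Module.Finite R (ModuleCat.of R (R ⧸ I ^ t)) :=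
    inferInstanceAs (Module.Finite R (R ⧸ I ^ t))
  have hfinR : Module.Finite R (ModuleCat.of R R) := inferInstanceAs (Module.Finite R R)
  have red : (∃ s ∉ p, s • e = 0) → ∃ s ∉ p, s • x = 0 := by
    rintro ⟨s, hs, h⟩
    refine ⟨s, hs, he t le_rfl s ?_⟩
    rw [← Ext.comp_smul, h, Ext.comp_zero]
  by_cases hIp : I ≤ p
  · rcases hri.lt_or_eq with hlt | rfl
    · obtain ⟨j, rfl⟩ : ∃ j, i = j + 1 := ⟨i - 1, by omega⟩
      exact red (ext_tors_high p hr _ _ j (by omega) e)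
    · obtain ⟨q, hq, hqp⟩ := Ideal.exists_minimalPrimes_le hIp
      have : q.IsPrime := hq.1.1
      obtain ⟨t', h, s, hs, h0⟩ := top_step p hr I q hq.1.2
        (lt_of_le_of_ne hqp (hmin rfl q hq)) t _ e
      exact ⟨s, hs, he t' h s h0⟩
  · exact red (outside p I hIp t i _ e)

end

lemma dim_bound {α : Type} [Preorder α] (S : Set α) (n c : ℕ)
    (hn : Order.krullDim α ≤ (n : WithBot ℕ∞)) (h : ∀ a ∈ S, (c : ℕ∞) ≤ Order.height a) :
    Order.krullDim S + (c : WithBot ℕ∞) ≤ (n : WithBot ℕ∞) := by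
  rcases isEmpty_or_nonempty S with he | ⟨⟨a⟩⟩
  · rw [Order.krullDim_eq_bot, WithBot.bot_add]; exact bot_le
  have hle : ∀ a : α, Order.height a ≤ (n : ℕ∞) := fun a => by
    have := (Order.height_le_krullDim a).trans hn
    exact_mod_cast this
  have hcn : c ≤ n := by exact_mod_cast (h a.1 a.2).trans (hle a.1)
  have key : Order.krullDim S ≤ ((n - c : ℕ) : WithBot ℕ∞) := by
    refine iSup_le fun s => ?_
    have hk : ∀ k : ℕ, ∀ hk : k < s.length + 1,
        ((c + k : ℕ) : ℕ∞) ≤ Order.height (s ⟨k, hk⟩).1 := by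
      intro k
      induction k with
      | zero => intro hk; exact h _ (s ⟨0, hk⟩).2
      | succ k ih =>
        intro hk
        have h1 := ih (by omega)
        have hlt : (s ⟨k, by omega⟩).1 < (s ⟨k+1, hk⟩).1 :=
          s.strictMono (by simp [Fin.lt_def] : (⟨k, by omega⟩ : Fin (s.length+1)) < ⟨k+1, hk⟩)
        refine le_trans ?_ (Order.height_add_one_le hlt)
        have := add_le_add_left h1 1
        rw [← add_assoc]
        exact_mod_cast add_le_add h1 (le_refl (1 : ℕ∞))
    have h2 := (hk s.length (by omega)).trans (hle _)
    have h3 : c + s.length ≤ n := by exact_mod_cast h2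
    have h4 : s.length ≤ n - c := by omega
    exact_mod_cast h4
  calc Order.krullDim S + (c : WithBot ℕ∞) ≤ ((n - c : ℕ) : WithBot ℕ∞) + (c : WithBot ℕ∞) :=
        add_le_add key le_rfl
    _ = (n : WithBot ℕ∞) := by
        have : (n - c) + c = n := by omega
        exact_mod_cast congrArg (Nat.cast : ℕ → WithBot ℕ∞) this

end S8
end

/-- Regular local ring `R` of dimension `n` containing a field, `I` a proper
ideal all of whose minimal primes have height `d`.  Then for every `i > d`,
`dim H_I^i(R) ≤ n - (i+1)`; equivalently every prime in the support of `H_I^i(R)` has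
height at least `i + 1`. -/
theorem stmt8 (R : Type) [CommRing R] [IsLocalRing R]
    (hreg : IsRegularLocal R) (hfield : ContainsField R)
    (n : ℕ) (hdim : ringKrullDim R = (n : WithBot ℕ∞))
    (I : Ideal R) (hI : I ≠ ⊤) (d : ℕ)
    (hmin : ∀ p ∈ I.minimalPrimes, idealHeight R p = (d : ℕ∞))
    (i : ℕ) (hi : d < i) :
    moduleSuppDim R (LocalCohomologyMod R I i) + ((i + 1 : ℕ) : WithBot ℕ∞)
        ≤ (n : WithBot ℕ∞) ∧
      ∀ p : PrimeSpectrum R, p ∈ Module.support R (LocalCohomologyMod R I i) →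
        ((i + 1 : ℕ) : ℕ∞) ≤ Order.height p := by
  obtain ⟨hN, s, hs, hc⟩ := hreg
  have hsn : s.card = n := by
    have h1 := hc.trans hdim
    exact_mod_cast h1
  have hR : S8.Reg R n := by
    refine ⟨⟨fun j => ((s.equivFinOfCardEq hsn).symm j : R), ?_⟩, hdim⟩
    rw [← hs]
    congr 1
    ext x
    constructor
    · rintro ⟨j, rfl⟩
      exact ((s.equivFinOfCardEq hsn).symm j).2
    · intro hx
      exact ⟨s.equivFinOfCardEq hsn ⟨x, hx⟩, by simp⟩
  have hsupp : ∀ p : PrimeSpectrum R, p ∈ Module.support R (LocalCohomologyMod R I i) →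
        ((i + 1 : ℕ) : ℕ∞) ≤ Order.height p := by
    intro p hp
    by_contra hlt
    obtain ⟨r, hr, hpr⟩ := S8.reg_loc hR p.asIdeal
    have hph : Order.height p = (r : ℕ∞) := by
      rw [← PrimeSpectrum.height_eq_orderHeight, hpr]
    have hri : r ≤ i := by
      rw [hph, not_le] at hlt
      have : r < i + 1 := by exact_mod_cast hlt
      omega
    obtain ⟨m, hm⟩ := Module.mem_support_iff'.mp hp
    obtain ⟨t, ht, htm⟩ := S8.main_tors p.asIdeal hr I i (by omega) hri (by
      rintro rfl q hq rfl
      have h1 := hmin _ hq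
      have h2 : (r : ℕ∞) ≤ idealHeight R p.asIdeal := by
        refine le_sInf ?_
        rintro h ⟨p', hp', rfl⟩
        rw [← hph]
        exact Order.height_mono hp'
      rw [h1] at h2
      have : r ≤ d := by exact_mod_cast h2
      omega) m
    exact hm t ht htm
  exact ⟨S8.dim_bound (Module.support R (LocalCohomologyMod R I i)) n (i + 1) hdim.le hsupp, hsupp⟩
end

section
/- Let (R, m) be a regular local ring of dimension n containing a field, and let p ⊆ q be prime ideals of R with ht_R(p) = n − 2 and ht_R(q) = n − 1. Then H_{pR_q}^{n−2}(R_q) is not an injective R_q-module; equivalently, μ^1(q, H_p^{n−2}(R)) ≠ 0. -/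
open CategoryTheory Opposite

noncomputable section

/-- The `j`-th Bass number `μ^j(p, M) = dim_{κ(p)} Ext^j_{R_p}(κ(p), M_p)` is nonzero,
expressed as nontriviality of the `Ext` module. -/
def BassNumberNonzero (R : Type) [CommRing R] (p : Ideal R) [p.IsPrime]
    (M : Type) [AddCommGroup M] [Module R M] (j : ℕ) : Prop :=
  Nontrivial
    (((Ext (Localization.AtPrime p) (ModuleCat (Localization.AtPrime p)) j).obj
        (op (ModuleCat.of (Localization.AtPrime p)
          (IsLocalRing.ResidueField (Localization.AtPrime p))))).obj
      (ModuleCat.of (Localization.AtPrime p) (LocalizedModule p.primeCompl M)))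

end

namespace S10

lemma homologyUnop_nat {V : Type*} [Category V] [Abelian V] {ι : Type*} {c : ComplexShape ι}
    {K L : HomologicalComplex Vᵒᵖ c} (φ : K ⟶ L) (i : ι) :
    HomologicalComplex.homologyMap ((HomologicalComplex.unopFunctor V c).map φ.op) i ≫
      (K.homologyUnop i).hom =
    (L.homologyUnop i).hom ≫ (HomologicalComplex.homologyMap φ i).unop := by
  have := HomologicalComplex.homologyOp_hom_naturality
    ((HomologicalComplex.unopFunctor V c).map φ.op) i
  have h2 := congrArg Quiver.Hom.unop this
  exact h2.symm

lemma glue_aux {C : Type*} [Category C] {a a' b b' c c' : C} (m : a' ⟶ a) (i : a ⟶ b) (i' : a' ⟶ b')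
    (k : b' ⟶ b) (u : c ≅ b) (u' : c' ≅ b') (H : c' ⟶ c) (h3 : m ≫ i = i' ≫ k)
    (h2 : H ≫ u.hom = u'.hom ≫ k) : m ≫ i ≫ u.inv = (i' ≫ u'.inv) ≫ H := by
  rw [reassoc_of% h3]
  simp only [Category.assoc]
  congr 1
  rw [Iso.eq_inv_comp, ← Category.assoc, Iso.comp_inv_eq]
  exact h2.symm

variable {R : Type} [CommRing R]

abbrev yF (Y : ModuleCat.{0} R) : ModuleCat.{0} R ⥤ (ModuleCat.{0} R)ᵒᵖ :=
  ((linearYoneda R (ModuleCat.{0} R)).obj Y).rightOp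

/-- map induced on Hom complexes -/
noncomputable def yMap {X X' : ModuleCat.{0} R} {P : ProjectiveResolution X} {P' : ProjectiveResolution X'}
    (φ : P.complex ⟶ P'.complex) (Y : ModuleCat.{0} R) :
    P'.complex.linearYonedaObj R Y ⟶ P.complex.linearYonedaObj R Y :=
  (HomologicalComplex.unopFunctor _ _).map
    (((yF Y).mapHomologicalComplex (ComplexShape.down ℕ)).map φ).op

lemma isoExt_nat {X X' : ModuleCat.{0} R} (P : ProjectiveResolution X) (P' : ProjectiveResolution X')
    (f : X ⟶ X') (φ : P.complex ⟶ P'.complex) (h : φ.f 0 ≫ P'.π.f 0 = P.π.f 0 ≫ f)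
    (Y : ModuleCat.{0} R) (n : ℕ) :
    ((Ext R (ModuleCat.{0} R) n).map f.op).app Y ≫ (P.isoExt (R := R) n Y).hom =
      (P'.isoExt (R := R) n Y).hom ≫ HomologicalComplex.homologyMap (yMap φ Y) n := by
  have h1 := ProjectiveResolution.isoLeftDerivedObj_inv_naturality f P P' φ h (yF Y) n
  have h2 := homologyUnop_nat (((yF Y).mapHomologicalComplex (ComplexShape.down ℕ)).map φ) n
  have h3 : (((yF Y).leftDerived n).map f).unop ≫ (P.isoLeftDerivedObj (yF Y) n).inv.unop
    = (P'.isoLeftDerivedObj (yF Y) n).inv.unop ≫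
      (HomologicalComplex.homologyMap (((yF Y).mapHomologicalComplex (ComplexShape.down ℕ)).map φ) n).unop :=
    congrArg Quiver.Hom.unop h1
  exact glue_aux _ _ _ _ _ _ _ h3 h2


variable {X : ModuleCat.{0} R} (P : ProjectiveResolution X) (Y : ModuleCat.{0} R) (n : ℕ)

/-- underlying cocycle -/
noncomputable def coc (z : (P.complex.linearYonedaObj R Y).cycles n) : P.complex.X n ⟶ Y :=
  ((P.complex.linearYonedaObj R Y).iCycles n).hom z

lemma coc_d (z : (P.complex.linearYonedaObj R Y).cycles n) :
    P.complex.d (n+1) n ≫ coc P Y n z = 0 := by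
  have := (P.complex.linearYonedaObj R Y).iCycles_d n (n+1)
  have h := congrArg (fun f => f.hom z) this
  exact h

lemma coc_surj (f : P.complex.X n ⟶ Y) (hf : P.complex.d (n+1) n ≫ f = 0) :
    ∃ z, coc P Y n z = f := by
  refine ⟨HomologicalComplex.cyclesMk (C := ModuleCat.{0} R) (K := P.complex.linearYonedaObj R Y) f (n+1) (by simp) hf, ?_⟩
  exact HomologicalComplex.i_cyclesMk (K := P.complex.linearYonedaObj R Y) f (n+1) (by simp) hf

lemma smul_extMk {n : ℕ} (r : R) (f : P.complex.X n ⟶ Y) (m : ℕ) (hm : n + 1 = m)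
    (hf : P.complex.d m n ≫ f = 0) :
    r • P.extMk f m hm hf = P.extMk (r • f) m hm (by simp [hf]) := by
  rw [Abelian.Ext.smul_eq_comp_mk₀, P.extMk_comp_mk₀]
  congr 1

noncomputable def theta : (P.complex.linearYonedaObj R Y).cycles n →ₗ[R] Abelian.Ext X Y n where
  toFun z := P.extMk (coc P Y n z) (n+1) rfl (coc_d P Y n z)
  map_add' a b := by
    rw [P.add_extMk]
    congr 1
    exact map_add ((P.complex.linearYonedaObj R Y).iCycles n).hom a b
  map_smul' r a := by
    rw [RingHom.id_apply, smul_extMk]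
    congr 1
    exact map_smul ((P.complex.linearYonedaObj R Y).iCycles n).hom r a

lemma theta_eq (z : (P.complex.linearYonedaObj R Y).cycles n) :
    theta P Y n z = P.extMk (coc P Y n z) (n+1) rfl (coc_d P Y n z) := rfl

lemma theta_surj : Function.Surjective (theta P Y n) := by
  intro x
  obtain ⟨f, hf, rfl⟩ := P.extMk_surjective x (n+1) rfl
  obtain ⟨z, hz⟩ := coc_surj P Y n f hf
  refine ⟨z, ?_⟩
  subst hz
  rfl

lemma coc_inj : Function.Injective (coc P Y n) := by
  have : Mono ((P.complex.linearYonedaObj R Y).iCycles n) := inferInstance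
  exact (ModuleCat.mono_iff_injective _).1 this

lemma extMk_zero_iff (f : P.complex.X 0 ⟶ Y) (hf : P.complex.d 1 0 ≫ f = 0) :
    P.extMk f 1 rfl hf = 0 ↔ f = 0 := by
  constructor
  · intro h
    rw [← P.extEquivCohomologyClass.apply_eq_iff_eq,
      P.extEquivCohomologyClass_extMk, P.extEquivCohomologyClass_zero,
      CochainComplex.HomComplex.CohomologyClass.mk_eq_zero_iff] at h
    rw [CochainComplex.HomComplex.Cocycle.toSingleMk_mem_coboundaries_iff _ _ _ _ _ 1 (by simp)] at h
    obtain ⟨g, hg⟩ := h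
    have hz : Limits.IsZero (P.cochainComplex.X 1) :=
      P.cochainComplex.isZero_of_isStrictlyLE 0 1 (by simp)
    have : g = 0 := hz.eq_of_src _ _
    subst this
    rw [Limits.comp_zero] at hg
    rw [← cancel_epi (P.cochainComplexXIso (-(0:ℕ)) 0 rfl).hom]
    rw [← hg]; simp
  · rintro rfl; simp

lemma homπ_ker (K : CochainComplex (ModuleCat.{0} R) ℕ) (z : K.cycles n) :
    (K.homologyπ n).hom z = 0 ↔ ∃ y, (K.toCycles ((ComplexShape.up ℕ).prev n) n).hom y = z := by
  have hex : (ShortComplex.mk _ _ (K.toCycles_comp_homologyπ ((ComplexShape.up ℕ).prev n) n)).Exact :=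
    ShortComplex.exact_of_g_is_cokernel _ (K.homologyIsCokernel _ n rfl)
  have := (ShortComplex.moduleCat_exact_iff _).1 hex z
  constructor
  · exact this
  · rintro ⟨y, rfl⟩
    exact congrArg (fun f => f.hom y) (K.toCycles_comp_homologyπ ((ComplexShape.up ℕ).prev n) n)

lemma ker_theta : LinearMap.ker (theta P Y n) = 
    LinearMap.ker ((P.complex.linearYonedaObj R Y).homologyπ n).hom := by
  ext z
  rw [LinearMap.mem_ker, LinearMap.mem_ker, homπ_ker]
  have key : ∀ i (y : (P.complex.linearYonedaObj R Y).X i), (((P.complex.linearYonedaObj R Y).toCycles i n).hom y = z) ↔ ((P.complex.linearYonedaObj R Y).d i n).hom y = coc P Y n z := by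
    intro i y
    rw [← (coc_inj P Y n).eq_iff]
    have : coc P Y n (((P.complex.linearYonedaObj R Y).toCycles i n).hom y) = ((P.complex.linearYonedaObj R Y).d i n).hom y :=
      congrArg (fun f => f.hom y) ((P.complex.linearYonedaObj R Y).toCycles_i i n)
    rw [this]
    exact Iff.rfl
  change P.extMk (coc P Y n z) (n+1) rfl (coc_d P Y n z) = 0 ↔ _
  simp_rw [key]
  rcases n with _ | k
  · rw [extMk_zero_iff]
    have : (P.complex.linearYonedaObj R Y).d ((ComplexShape.up ℕ).prev 0) 0 = 0 := (P.complex.linearYonedaObj R Y).shape _ _ (by simp)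
    rw [this]
    constructor
    · intro h; exact ⟨0, by rw [h]; rfl⟩
    · rintro ⟨y, h⟩; exact h.symm
  · rw [P.extMk_eq_zero_iff _ _ _ _ k rfl]
    have : (ComplexShape.up ℕ).prev (k+1) = k := by simp
    rw [this]
    rfl

/-- homology to Ext -/
noncomputable def homEquivExt : (P.complex.linearYonedaObj R Y).homology n ≃ₗ[R] Abelian.Ext X Y n :=
  (LinearMap.quotKerEquivOfSurjective ((P.complex.linearYonedaObj R Y).homologyπ n).hom
    ((ModuleCat.epi_iff_surjective _).1 inferInstance)).symm.trans
  ((Submodule.quotEquivOfEq _ _ (ker_theta P Y n).symm).trans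
    (LinearMap.quotKerEquivOfSurjective (theta P Y n) (theta_surj P Y n)))

lemma homEquivExt_π (z : (P.complex.linearYonedaObj R Y).cycles n) :
    homEquivExt P Y n (((P.complex.linearYonedaObj R Y).homologyπ n).hom z) = theta P Y n z := by
  have : (LinearMap.quotKerEquivOfSurjective ((P.complex.linearYonedaObj R Y).homologyπ n).hom
    ((ModuleCat.epi_iff_surjective _).1 inferInstance)).symm 
      (((P.complex.linearYonedaObj R Y).homologyπ n).hom z) = Submodule.Quotient.mk z := by
    rw [LinearEquiv.symm_apply_eq]; rfl
  simp only [homEquivExt, LinearEquiv.trans_apply, this]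
  rfl

variable (X) in
/-- bridge -/
noncomputable def bridge : ((Ext R (ModuleCat.{0} R) n).obj (op X)).obj Y ≃ₗ[R] Abelian.Ext X Y n :=
  ((projectiveResolution X).isoExt (R := R) n Y).toLinearEquiv.trans
    (homEquivExt (projectiveResolution X) Y n)

lemma bridge_nat {X X' : ModuleCat.{0} R} (f : X ⟶ X') (x : ((Ext R (ModuleCat.{0} R) n).obj (op X')).obj Y) :
    bridge X Y n ((((Ext R (ModuleCat.{0} R) n).map f.op).app Y).hom x) =
      (Abelian.Ext.mk₀ f).comp (bridge X' Y n x) (zero_add n) := by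
  let P := projectiveResolution X
  let P' := projectiveResolution X'
  let φ : P.complex ⟶ P'.complex := ProjectiveResolution.lift f P P'
  have h : φ.f 0 ≫ P'.π.f 0 = P.π.f 0 ≫ f := by
    exact ProjectiveResolution.lift_commutes_zero f P P'
  have hn := isoExt_nat P P' f φ h Y n
  have hn2 : (P.isoExt (R := R) n Y).hom.hom ((((Ext R (ModuleCat.{0} R) n).map f.op).app Y).hom x)
    = (HomologicalComplex.homologyMap (yMap φ Y) n).hom ((P'.isoExt (R := R) n Y).hom.hom x) :=
    congrArg (fun g => g.hom x) hn
  change homEquivExt P Y n ((P.isoExt (R := R) n Y).hom.hom _) =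
    (Abelian.Ext.mk₀ f).comp (homEquivExt P' Y n ((P'.isoExt (R := R) n Y).hom.hom x)) (zero_add n)
  rw [hn2]
  obtain ⟨z, hz⟩ := (ModuleCat.epi_iff_surjective ((P'.complex.linearYonedaObj R Y).homologyπ n)).1 inferInstance
    ((P'.isoExt (R := R) n Y).hom.hom x)
  rw [← hz]
  have h5 : (HomologicalComplex.homologyMap (yMap φ Y) n).hom (((P'.complex.linearYonedaObj R Y).homologyπ n).hom z)
     = ((P.complex.linearYonedaObj R Y).homologyπ n).hom ((HomologicalComplex.cyclesMap (yMap φ Y) n).hom z) :=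
    congrArg (fun g => g.hom z) (HomologicalComplex.homologyπ_naturality (yMap φ Y) n)
  have h6 := homEquivExt_π P' Y n z
  refine (congrArg _ h5).trans ?_
  refine (homEquivExt_π P Y n _).trans ?_
  refine Eq.trans ?_ (congrArg (fun w => (Abelian.Ext.mk₀ f).comp w (zero_add n)) h6.symm)
  have h7 : coc P Y n ((HomologicalComplex.cyclesMap (yMap φ Y) n).hom z) = φ.f n ≫ coc P' Y n z :=
    congrArg (fun g => g.hom z) (HomologicalComplex.cyclesMap_i (yMap φ Y) n)
  rw [theta_eq, theta_eq, ProjectiveResolution.mk₀_comp_extMk (φ := ⟨φ, by simpa using h⟩)]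
  congr 1

end S10

namespace S10
section P1
variable {R : Type} [CommRing R]
open RingTheory.Sequence Pointwise

lemma smul_top_quot {M : Type*} [AddCommGroup M]
    [Module R M] {I : Ideal R} {r : R} (hr : r ∈ I)
    (hI : I • (⊤ : Submodule R M) ≠ ⊤) :
    I • (⊤ : Submodule R (QuotSMulTop r M)) ≠ ⊤ := by
  by_contra eq
  absurd congrArg (Submodule.comap (Submodule.mkQ _)) eq
  simpa [Submodule.comap_smul_top_of_surjective I _ (Submodule.mkQ_surjective _),
    Submodule.smul_mono_left ((Ideal.span_singleton_le_iff_mem I).mpr hr),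
    ← Submodule.ideal_span_singleton_smul] using hI

lemma exists_inj_hom_ext [IsNoetherianRing R] (I : Ideal R) (X : ModuleCat.{0} R)
    [Module.Finite R X] (Xsupp : Module.support R X ⊆ PrimeSpectrum.zeroLocus I)
    (rs : List R) : ∀ (M : Type) [AddCommGroup M] [Module R M] [Module.Finite R M]
    (_ : I • (⊤ : Submodule R M) < ⊤) (_ : ∀ r ∈ rs, r ∈ I) (_ : IsRegular M rs),
    ∃ f : (X →ₗ[R] (M ⧸ (Ideal.ofList rs • ⊤ : Submodule R M))) →ₗ[R]
      Abelian.Ext X (ModuleCat.of R M) rs.length, Function.Injective f := by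
  induction rs with
  | nil =>
    intro M _ _ _ _ _ _
    have e : (M ⧸ (Ideal.ofList ([] : List R) • ⊤ : Submodule R M)) ≃ₗ[R] M :=
      Submodule.quotEquivOfEqBot _ (by simp)
    refine ⟨((Abelian.Ext.linearEquiv₀ (R := R) (X := X) (Y := ModuleCat.of R M)).symm.toLinearMap.comp
      (ModuleCat.homLinearEquiv (S := R) (M := X) (N := ModuleCat.of R M)).symm.toLinearMap).comp
      (LinearEquiv.congrRight e).toLinearMap, ?_⟩
    simp only [LinearMap.coe_comp, LinearEquiv.coe_coe]
    exact (((Abelian.Ext.linearEquiv₀ (R := R)).symm.injective).comp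
      (ModuleCat.homLinearEquiv (S := R)).symm.injective).comp (LinearEquiv.injective _)
  | cons a rs ih =>
    intro M _ _ _ hlt hmem hreg
    have hreg' := (isRegular_cons_iff M a rs).1 hreg
    have hmem' : ∀ r ∈ rs, r ∈ I := fun r hr => hmem r (List.mem_cons_of_mem _ hr)
    obtain ⟨f, hf⟩ := ih (QuotSMulTop a M)
      (smul_top_quot (hmem a List.mem_cons_self) hlt.ne).lt_top hmem' hreg'.2
    have hr : IsSMulRegular (ModuleCat.of R M) a := hreg'.1
    have hS := hr.smulShortComplex_shortExact
    have h0 := ModuleCat.subsingleton_ext_of_exists_isRegular I X Xsupp (ModuleCat.of R M) hlt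
      (a :: rs) hmem hreg rs.length (by simp)
    let δ : Abelian.Ext X (ModuleCat.of R (QuotSMulTop a M)) rs.length →ₗ[R]
      Abelian.Ext X (ModuleCat.of R M) (a :: rs).length :=
      Abelian.Ext.postcompOfLinear hS.extClass R X rfl
    have hδ : Function.Injective δ := by
      refine (injective_iff_map_eq_zero δ).2 fun x hx => ?_
      obtain ⟨y, hy⟩ := Abelian.Ext.covariant_sequence_exact₃ X hS x rfl hx
      rw [← hy, show y = 0 from h0.elim y 0, Abelian.Ext.zero_comp]; rfl
    refine ⟨(δ.comp f).comp (LinearEquiv.congrRight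
      (Submodule.quotOfListConsSMulTopEquivQuotSMulTopInner M a rs)).toLinearMap, ?_⟩
    exact (hδ.comp hf).comp (LinearEquiv.injective _)
end P1
end S10

namespace S10
section P2
variable {R : Type} [CommRing R]
open Limits

/-- transition -/
noncomputable def fac (I : Ideal R) {t s : ℕ} (h : t ≤ s) :
    ModuleCat.of R (R ⧸ I ^ s) ⟶ ModuleCat.of R (R ⧸ I ^ t) :=
  ModuleCat.ofHom (Submodule.mapQ _ _ LinearMap.id (Ideal.pow_le_pow_right h))

lemma lc_colim (I : Ideal R) (d : ℕ) :
    ∃ γ : ∀ t : ℕ, Abelian.Ext (ModuleCat.of R (R ⧸ I ^ t)) (ModuleCat.of R R) d →ₗ[R]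
        ((localCohomology I d).obj (ModuleCat.of R R) : Type),
      (∀ h, ∃ t u, γ t u = h) ∧
      (∀ t u, γ t u = 0 → ∃ s, ∃ h : t ≤ s, (Abelian.Ext.mk₀ (fac I h)).comp u (zero_add d) = 0) ∧
      (∀ t s (h : t ≤ s) u, γ s ((Abelian.Ext.mk₀ (fac I h)).comp u (zero_add d)) = γ t u) := by
  let D := localCohomology.diagram (localCohomology.idealPowersDiagram I) d
  let ev := (evaluation (ModuleCat.{0} R) (ModuleCat.{0} R)).obj (ModuleCat.of R R)
  let hc : IsColimit (ev.mapCocone (colimit.cocone D)) := isColimitOfPreserves ev (colimit.isColimit D)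
  let c := ev.mapCocone (colimit.cocone D)
  let br := fun t : ℕ => bridge (ModuleCat.of R (R ⧸ I ^ t)) (ModuleCat.of R R) d
  let ι : ∀ t : ℕ, (((Ext R (ModuleCat.{0} R) d).obj (op (ModuleCat.of R (R ⧸ I ^ t)))).obj (ModuleCat.of R R)) →ₗ[R]
     ((localCohomology I d).obj (ModuleCat.of R R) : Type) := fun t => (c.ι.app (op (op t))).hom
  refine ⟨fun t => (ι t).comp (br t).symm.toLinearMap, ?_, ?_, ?_⟩
  · intro h
    obtain ⟨⟨⟨t⟩⟩, u, hu⟩ := Concrete.isColimit_exists_rep (D ⋙ ev) hc h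
    refine ⟨t, br t u, ?_⟩
    exact (congrArg (ι t) ((br t).symm_apply_apply u)).trans hu
  · intro t u hu
    have := (Concrete.isColimit_rep_eq_iff_exists (D ⋙ ev) hc (i := op (op t)) (j := op (op t))
      ((br t).symm u) (0 : (((Ext R (ModuleCat.{0} R) d).obj (op (ModuleCat.of R (R ⧸ I ^ t)))).obj (ModuleCat.of R R)))).1 (hu.trans (map_zero (ι t)).symm)
    obtain ⟨⟨⟨s⟩⟩, f, g, hfg⟩ := this
    have hts : t ≤ s := f.unop.unop.le
    refine ⟨s, hts, ?_⟩
    have h1 := bridge_nat (ModuleCat.of R R) d (fac I hts) ((br t).symm u)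
    have h2 : (((Ext R (ModuleCat.{0} R) d).map (fac I hts).op).app (ModuleCat.of R R)).hom ((br t).symm u) = 0 := by
      refine Eq.trans ?_ (hfg.trans ?_)
      · rfl
      · exact map_zero (((D ⋙ ev).map g).hom)
    rw [h2, map_zero] at h1
    rw [show bridge (ModuleCat.of R (R ⧸ I ^ t)) (ModuleCat.of R R) d ((br t).symm u) = u from (br t).apply_symm_apply u] at h1
    exact h1.symm
  · intro t s h u
    have h1 := bridge_nat (ModuleCat.of R R) d (fac I h) ((br t).symm u)
    rw [show bridge (ModuleCat.of R (R ⧸ I ^ t)) (ModuleCat.of R R) d ((br t).symm u) = u from (br t).apply_symm_apply u] at h1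
    simp only [LinearMap.comp_apply, LinearEquiv.coe_coe]
    rw [← h1]
    rw [show (br s).symm (bridge _ _ _ _) = _ from (br s).symm_apply_apply _]
    have := c.w (show (op (op t) : (ℕᵒᵖ)ᵒᵖ) ⟶ op (op s) from (homOfLE h).op.op)
    exact congrArg (fun q => q.hom ((br t).symm u)) this

section
open RingTheory.Sequence
variable [IsNoetherianRing R] (I : Ideal R) (hI : I ≠ ⊤) (rs : List R) (hmem : ∀ r ∈ rs, r ∈ I)
  (hreg : IsRegular R rs)

include hI hmem hreg in
lemma ext_vanish (X : ModuleCat.{0} R) [Module.Finite R X] (t : ℕ)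
    (hX : I ^ t ≤ Module.annihilator R X) (j : ℕ) (hj : j < rs.length) :
    Subsingleton (Abelian.Ext X (ModuleCat.of R R) j) := by
  refine ModuleCat.subsingleton_ext_of_exists_isRegular I X ?_ (ModuleCat.of R R) ?_ rs hmem hreg j hj
  · rw [Module.support_eq_zeroLocus]
    intro p hp x hx
    have : x ^ t ∈ p.asIdeal := hp (hX (Ideal.pow_mem_pow hx t))
    exact p.isPrime.mem_of_pow_mem _ this
  · rw [lt_top_iff_ne_top]
    simpa using! hI

include hI hmem hreg in
lemma precomp_inj {X X' : ModuleCat.{0} R} (g : X ⟶ X') [Epi g] [Module.Finite R X] (t : ℕ)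
    (hX : I ^ t ≤ Module.annihilator R X) (u : Abelian.Ext X' (ModuleCat.of R R) rs.length)
    (hu : (Abelian.Ext.mk₀ g).comp u (zero_add _) = 0) : u = 0 := by
  rcases Nat.eq_zero_or_pos rs.length with h0 | h0
  · revert u hu
    rw [h0]
    intro u hu
    exact Abelian.Ext.precomp_mk₀_injective_of_epi _ g (hu.trans (Abelian.Ext.comp_zero _ _ _ _ (zero_add 0)).symm)
  · let K := LinearMap.ker g.hom
    let S : ShortComplex (ModuleCat.{0} R) := ShortComplex.mk (ModuleCat.ofHom K.subtype) g (by
      ext x; exact x.2)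
    have hS : S.ShortExact := by
      refine { exact := ?_, mono_f := ?_, epi_g := ?_ }
      · rw [ShortComplex.ShortExact.moduleCat_exact_iff_function_exact]
        intro x
        simp [S, K]
      · rw [ModuleCat.mono_iff_injective]
        exact K.injective_subtype
      · assumption
    obtain ⟨x, hx⟩ := Abelian.Ext.contravariant_sequence_exact₃ hS (ModuleCat.of R R) u hu
      (n₀ := rs.length - 1) (by omega)
    have : Module.Finite R S.X₁ := inferInstanceAs (Module.Finite R K)
    have := ext_vanish I hI rs hmem hreg S.X₁ t (by
      refine hX.trans ?_
      intro a ha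
      rw [Module.mem_annihilator] at ha ⊢
      intro m
      exact Subtype.ext (ha _)) (rs.length - 1) (by omega)
    rw [← hx, Subsingleton.elim x 0, Abelian.Ext.comp_zero]

instance (t s : ℕ) (h : t ≤ s) : Epi (fac I h) := by
  rw [ModuleCat.epi_iff_surjective]
  intro x
  obtain ⟨y, rfl⟩ := Ideal.Quotient.mk_surjective x
  exact ⟨Ideal.Quotient.mk _ y, rfl⟩

include hI hmem hreg in
lemma descend (t : ℕ) (ht : 1 ≤ t)
    (u : Abelian.Ext (ModuleCat.of R (R ⧸ I ^ t)) (ModuleCat.of R R) rs.length)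
    (hu : ∀ a ∈ I, a • u = 0) : ∃ v, (Abelian.Ext.mk₀ (fac I ht)).comp v (zero_add _) = u := by
  let K := LinearMap.ker (fac I ht).hom
  let S : ShortComplex (ModuleCat.{0} R) := ShortComplex.mk (ModuleCat.ofHom K.subtype) (fac I ht) (by
      ext x; exact x.2)
  have hS : S.ShortExact := by
      refine { exact := ?_, mono_f := ?_, epi_g := ?_ }
      · rw [ShortComplex.ShortExact.moduleCat_exact_iff_function_exact]
        intro x
        simp [S, K]
      · rw [ModuleCat.mono_iff_injective]
        exact K.injective_subtype
      · exact inferInstanceAs (Epi (fac I ht))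
  refine Abelian.Ext.contravariant_sequence_exact₂ hS (ModuleCat.of R R) u ?_
  obtain ⟨r, a, ha⟩ := Submodule.fg_iff_exists_fin_generating_family.1 (IsNoetherian.noetherian I)
  have haI : ∀ i, a i ∈ I := fun i => ha ▸ Submodule.subset_span (Set.mem_range_self i)
  let F := ModuleCat.of R (Fin r → R ⧸ I ^ t)
  let φ₀ : (Fin r → R ⧸ I ^ t) →ₗ[R] (R ⧸ I ^ t) := ∑ i, (LinearMap.proj i : (Fin r → R ⧸ I ^ t) →ₗ[R] (R ⧸ I ^ t)).comp (a i • LinearMap.id)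
  have hφ₀ : ∀ x, φ₀ x = ∑ i, a i • x i := by intro x; simp [φ₀]
  have hK : ∀ y : R, (Ideal.Quotient.mk (I ^ t) y) ∈ K ↔ y ∈ I := by
    intro y
    have : (Ideal.Quotient.mk (I ^ t) y) ∈ K ↔ Ideal.Quotient.mk (I ^ 1) y = 0 := Iff.rfl
    rw [this, Ideal.Quotient.eq_zero_iff_mem, pow_one]
  have hφK : ∀ x, φ₀ x ∈ K := by
    intro x
    rw [hφ₀]
    refine sum_mem fun i _ => ?_
    obtain ⟨y, hy⟩ := Ideal.Quotient.mk_surjective (x i)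
    rw [← hy]
    exact (hK (a i * y)).2 (I.mul_mem_right _ (haI i))
  let φ : F ⟶ S.X₁ := ModuleCat.ofHom (φ₀.codRestrict K hφK)
  have hφ : Epi φ := by
    rw [ModuleCat.epi_iff_surjective]
    rintro ⟨x, hx⟩
    obtain ⟨y, rfl⟩ := Ideal.Quotient.mk_surjective x
    have hy := (hK y).1 hx
    rw [← ha] at hy
    obtain ⟨c, hc⟩ := (Submodule.mem_span_range_iff_exists_fun R).1 hy
    refine ⟨fun i => Ideal.Quotient.mk _ (c i), Subtype.ext ?_⟩
    refine (hφ₀ _).trans ?_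
    change _ = Ideal.Quotient.mk (I ^ t) y
    rw [← hc, map_sum]
    refine Finset.sum_congr rfl fun i _ => ?_
    rw [smul_eq_mul, mul_comm]
    rfl
  have : Module.Finite R F := inferInstanceAs (Module.Finite R (Fin r → R ⧸ I ^ t))
  refine precomp_inj I hI rs hmem hreg φ t ?_ _ ?_
  · intro b hb
    rw [Module.mem_annihilator]
    intro m
    funext i
    obtain ⟨y, hy⟩ := Ideal.Quotient.mk_surjective (m i)
    change b • m i = 0
    rw [← hy]
    exact Ideal.Quotient.eq_zero_iff_mem.2 (Ideal.mul_mem_right _ _ hb)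
  · have h1 : φ ≫ S.f = ∑ i, (ModuleCat.ofHom (LinearMap.proj i : (Fin r → R ⧸ I ^ t) →ₗ[R] (R ⧸ I ^ t))
        : F ⟶ ModuleCat.of R (R ⧸ I ^ t)) ≫ (a i • 𝟙 _) := by
      refine ModuleCat.hom_ext (LinearMap.ext fun x => ?_)
      refine (hφ₀ x).trans ?_
      rw [ModuleCat.hom_sum, LinearMap.sum_apply]
      rfl
    rw [Abelian.Ext.mk₀_comp_mk₀_assoc, h1, ← Abelian.Ext.addEquiv₀_symm_apply, map_sum, Abelian.Ext.sum_comp]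
    refine Finset.sum_eq_zero fun i _ => ?_
    rw [Abelian.Ext.addEquiv₀_symm_apply, ← Abelian.Ext.mk₀_comp_mk₀_assoc, Abelian.Ext.mk₀_smul,
      Abelian.Ext.smul_comp, Abelian.Ext.mk₀_id_comp, hu _ (haI i), Abelian.Ext.comp_zero]

include hI hmem hreg in
lemma lemmaB :
    (Submodule.torsionBySet R ((localCohomology I rs.length).obj (ModuleCat.of R R) : Type) (I : Set R)).FG ∧
    ∀ w : R, (∀ a ∈ I, a * w ∈ Ideal.ofList rs) →
      ∃ ζ : ((localCohomology I rs.length).obj (ModuleCat.of R R) : Type),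
        ∀ a : R, a • ζ = 0 ↔ a * w ∈ Ideal.ofList rs := by
  obtain ⟨γ, h1, h2, h3⟩ := lc_colim I rs.length
  have hinj : ∀ t, Function.Injective (γ t) := by
    intro t
    refine (injective_iff_map_eq_zero _).2 fun u hu => ?_
    obtain ⟨s, hts, h⟩ := h2 t u hu
    have : Module.Finite R (ModuleCat.of R (R ⧸ I ^ s)) := inferInstanceAs (Module.Finite R (R ⧸ I ^ s))
    exact precomp_inj I hI rs hmem hreg (fac I hts) s (by
      change _ ≤ Module.annihilator R (R ⧸ I ^ s)
      rw [Ideal.annihilator_quotient]) u h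
  constructor
  · have hle : Submodule.torsionBySet R ((localCohomology I rs.length).obj (ModuleCat.of R R) : Type) (I : Set R) ≤ LinearMap.range (γ 1) := by
      intro h hh
      rw [Submodule.mem_torsionBySet_iff] at hh
      obtain ⟨t, u, rfl⟩ := h1 h
      obtain ⟨s, hs1, hts⟩ : ∃ s, 1 ≤ s ∧ t ≤ s := ⟨t + 1, by omega, by omega⟩
      rw [← h3 t s hts] at hh ⊢
      obtain ⟨v, hv⟩ := descend I hI rs hmem hreg s hs1 ((Abelian.Ext.mk₀ (fac I hts)).comp u (zero_add _)) (by
        intro a ha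
        apply hinj s
        rw [map_smul, map_zero]
        exact hh ⟨a, ha⟩)
      rw [← hv, h3]
      exact ⟨v, rfl⟩
    have : Module.Finite R (ModuleCat.of R (R ⧸ I ^ 1)) := inferInstanceAs (Module.Finite R (R ⧸ I ^ 1))
    have : Module.Finite R (ModuleCat.of R R) := inferInstanceAs (Module.Finite R R)
    have : Module.Finite R (Abelian.Ext (ModuleCat.of R (R ⧸ I ^ 1)) (ModuleCat.of R R) rs.length) :=
      ModuleCat.finite_ext _ _ _ _
    have : IsNoetherian R (LinearMap.range (γ 1)) := inferInstance
    exact Submodule.FG.of_le (Module.Finite.iff_fg.1 inferInstance) hle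
  · intro w hw
    let X := ModuleCat.of R (R ⧸ I ^ 1)
    have : Module.Finite R X := inferInstanceAs (Module.Finite R (R ⧸ I ^ 1))
    obtain ⟨f, hf⟩ := exists_inj_hom_ext I X (by
      change Module.support R (R ⧸ I ^ 1) ⊆ _
      rw [Module.support_eq_zeroLocus, Ideal.annihilator_quotient, pow_one]) rs R (by
        rw [lt_top_iff_ne_top]
        simpa using! hI) hmem hreg
    let φ : X →ₗ[R] (R ⧸ (Ideal.ofList rs • ⊤ : Submodule R R)) :=
      Submodule.liftQ (I ^ 1) (LinearMap.toSpanSingleton R _ (Submodule.Quotient.mk w)) (by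
        intro a ha
        rw [pow_one] at ha
        rw [LinearMap.mem_ker, LinearMap.toSpanSingleton_apply, ← Submodule.Quotient.mk_smul,
          Submodule.Quotient.mk_eq_zero]
        simpa using hw a ha)
    refine ⟨γ 1 (f φ), fun a => ?_⟩
    rw [← map_smul, ← map_smul, map_eq_zero_iff _ (hinj 1), map_eq_zero_iff _ hf]
    have hφ : ∀ b : R, (a • φ) (Submodule.Quotient.mk b : R ⧸ I ^ 1) = b • Submodule.Quotient.mk (a * w) := by
      intro b
      change a • (b • (Submodule.Quotient.mk w : R ⧸ (Ideal.ofList rs • ⊤ : Submodule R R))) = _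
      rw [smul_comm]; rfl
    have hz : (Submodule.Quotient.mk (a * w) : R ⧸ (Ideal.ofList rs • ⊤ : Submodule R R)) = 0 ↔ a * w ∈ Ideal.ofList rs := by
      rw [Submodule.Quotient.mk_eq_zero]
      simp
    rw [← hz]
    constructor
    · intro h
      have := hφ 1
      rw [h, one_smul] at this
      exact this.symm
    · intro h
      refine LinearMap.ext fun x => ?_
      obtain ⟨b, rfl⟩ := Submodule.Quotient.mk_surjective _ x
      rw [hφ b, h, smul_zero]; rfl

end
end P2
end S10

namespace S10
section P4
variable {S : Type} [CommRing S] 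
open Pointwise

lemma ext_iso_zero {X X' Y : ModuleCat.{0} S} (n : ℕ) (e : X ⟶ X') (e' : X' ⟶ X) (h : e ≫ e' = 𝟙 X)
    (h0 : Subsingleton (Abelian.Ext X' Y n)) : Subsingleton (Abelian.Ext X Y n) := by
  refine subsingleton_of_forall_eq 0 fun u => ?_
  rw [← Abelian.Ext.mk₀_id_comp u, ← h, ← Abelian.Ext.mk₀_comp_mk₀_assoc,
    Subsingleton.elim ((Abelian.Ext.mk₀ e').comp u _) 0, Abelian.Ext.comp_zero]

lemma devissage [IsLocalRing S] [IsNoetherianRing S] (J : Ideal S)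
    (hJ : ∀ Q : Ideal S, Q.IsPrime → J ≤ Q → Q = IsLocalRing.maximalIdeal S) (Y : ModuleCat.{0} S) (n : ℕ)
    (h0 : Subsingleton (Abelian.Ext (ModuleCat.of S (IsLocalRing.ResidueField S)) Y n))
    (M : Type) [AddCommGroup M] [Module S M] [Module.Finite S M] :
    J ≤ Module.annihilator S M → Subsingleton (Abelian.Ext (ModuleCat.of S M) Y n) := by
  refine IsNoetherianRing.induction_on_isQuotientEquivQuotientPrime S (M := M) inferInstance
    (motive := fun M _ _ _ => J ≤ Module.annihilator S M → Subsingleton (Abelian.Ext (ModuleCat.of S M) Y n))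
    ?_ ?_ ?_
  · intro N _ _ _ _ _
    refine ext_iso_zero n (X' := ModuleCat.of S (IsLocalRing.ResidueField S)) 0 0 ?_ h0
    refine ModuleCat.hom_ext (LinearMap.ext fun x => ?_)
    exact Subsingleton.elim (α := N) _ _
  · intro N _ _ _ Q e hN
    have hQ : Q.asIdeal = IsLocalRing.maximalIdeal S := by
      refine hJ _ Q.2 ?_
      rwa [e.annihilator_eq, Ideal.annihilator_quotient] at hN
    have e' : N ≃ₗ[S] IsLocalRing.ResidueField S :=
      e.trans (Submodule.quotEquivOfEq _ _ hQ)
    refine ext_iso_zero n (X' := ModuleCat.of S (IsLocalRing.ResidueField S)) (ModuleCat.ofHom e'.toLinearMap)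
      (ModuleCat.ofHom e'.symm.toLinearMap) ?_ h0
    refine ModuleCat.hom_ext (LinearMap.ext fun x => ?_)
    exact e'.symm_apply_apply x
  · intro N₁ _ _ _ N₂ _ _ _ N₃ _ _ _ f g hf hg hfg h1 h3 h2
    have i1 := h1 (h2.trans (f.annihilator_le_of_injective hf))
    have i3 := h3 (h2.trans (g.annihilator_le_of_surjective hg))
    let T : ShortComplex (ModuleCat.{0} S) := ShortComplex.mk (ModuleCat.ofHom f) (ModuleCat.ofHom g) (by
      ext x; exact hfg.apply_apply_eq_zero x)
    have hT : T.ShortExact := by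
      refine { exact := ?_, mono_f := ?_, epi_g := ?_ }
      · rw [ShortComplex.ShortExact.moduleCat_exact_iff_function_exact]
        exact hfg
      · rw [ModuleCat.mono_iff_injective]
        exact hf
      · rw [ModuleCat.epi_iff_surjective]
        exact hg
    refine subsingleton_of_forall_eq 0 fun u => ?_
    obtain ⟨v, hv⟩ := Abelian.Ext.contravariant_sequence_exact₂ hT Y u (i1.elim _ _)
    rw [← hv, show v = 0 from i3.elim _ _, Abelian.Ext.comp_zero]

lemma lemmaA [IsLocalRing S] [IsNoetherianRing S] (P : Ideal S) [P.IsPrime]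
    (hPm : P ≠ IsLocalRing.maximalIdeal S)
    (hP : ∀ Q : Ideal S, Q.IsPrime → P < Q → Q = IsLocalRing.maximalIdeal S)
    (H : Type) [AddCommGroup H] [Module S H] (hfg : (Submodule.torsionBySet S H (P : Set S)).FG)
    (hne : Submodule.torsionBySet S H (P : Set S) ≠ ⊥) :
    Nontrivial (Abelian.Ext (ModuleCat.of S (IsLocalRing.ResidueField S)) (ModuleCat.of S H) 1) := by
  by_contra hcon
  rw [not_nontrivial_iff_subsingleton] at hcon
  obtain ⟨x, hxm, hxP⟩ := SetLike.exists_of_lt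
    (lt_of_le_of_ne (IsLocalRing.le_maximalIdeal (Ideal.IsPrime.ne_top ‹P.IsPrime›)) hPm)
  have hreg : IsSMulRegular (ModuleCat.of S (S ⧸ P)) x := by
    change IsSMulRegular (S ⧸ P) x
    intro a b hab
    have hx : Ideal.Quotient.mk P x ≠ 0 := by rwa [Ne, Ideal.Quotient.eq_zero_iff_mem]
    exact mul_left_cancel₀ hx hab
  have hS := hreg.smulShortComplex_shortExact
  have hE : Subsingleton (Abelian.Ext (ModuleCat.of S (QuotSMulTop x (S ⧸ P))) (ModuleCat.of S H) 1) := by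
    refine devissage (P ⊔ Ideal.span {x}) ?_ _ 1 hcon _ ?_
    · intro Q hQ hle
      refine hP Q hQ (lt_of_le_of_ne (le_sup_left.trans hle) ?_)
      rintro rfl
      exact hxP (hle (Ideal.mem_sup_right (Ideal.mem_span_singleton_self x)))
    · refine sup_le ?_ ?_
      · refine le_trans (Ideal.annihilator_quotient (I := P)).ge ?_
        exact LinearMap.annihilator_le_of_surjective (Submodule.mkQ _) (Submodule.mkQ_surjective _)
      · rw [Ideal.span_singleton_le_iff_mem, Module.mem_annihilator]
        intro m
        obtain ⟨y, rfl⟩ := Submodule.mkQ_surjective _ m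
        rw [← map_smul]
        simp only [Submodule.mkQ_apply, Submodule.Quotient.mk_eq_zero]
        exact Submodule.smul_mem_pointwise_smul _ _ _ trivial
  refine hne (Submodule.eq_bot_of_le_smul_of_le_jacobson_bot (Ideal.span {x}) _ hfg ?_ ?_)
  · intro h hh
    rw [Submodule.mem_torsionBySet_iff] at hh
    let f : (S ⧸ P) →ₗ[S] H := Submodule.liftQ P (LinearMap.toSpanSingleton S H h) (by
      intro a ha
      exact hh ⟨a, ha⟩)
    obtain ⟨g, hg⟩ := Abelian.Ext.contravariant_sequence_exact₁ hS (ModuleCat.of S H)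
      (n₁ := 1) (Abelian.Ext.mk₀ (ModuleCat.ofHom f : ModuleCat.of S (S ⧸ P) ⟶ ModuleCat.of S H)) rfl (hE.elim _ _)
    obtain ⟨g, rfl⟩ := Abelian.Ext.homEquiv₀.symm.surjective g
    rw [Abelian.Ext.homEquiv₀_symm_apply, Abelian.Ext.mk₀_comp_mk₀] at hg
    have hg' := Abelian.Ext.homEquiv₀.symm.injective hg
    have h1 := congrArg (fun q => q.hom (Submodule.Quotient.mk 1 : S ⧸ P)) hg'
    let g' : (S ⧸ P) →ₗ[S] H := g.hom
    have h2 : g' (x • (Submodule.Quotient.mk 1 : S ⧸ P)) = h := h1.trans (one_smul S h)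
    rw [map_smul] at h2
    rw [← h2]
    refine Submodule.smul_mem_smul (Ideal.mem_span_singleton_self x) ?_
    rw [Submodule.mem_torsionBySet_iff]
    rintro ⟨a, ha⟩
    refine (map_smul g' a (Submodule.Quotient.mk 1 : S ⧸ P)).symm.trans ?_
    rw [show a • (Submodule.Quotient.mk 1 : S ⧸ P) = 0 from
      (Submodule.Quotient.mk_eq_zero _).2 (by simpa using ha)]
    exact map_zero _
  · rw [IsLocalRing.jacobson_eq_maximalIdeal _ bot_ne_top, Ideal.span_singleton_le_iff_mem]
    exact hxm
end P4
end S10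

namespace S10
section P3
open RingTheory.Sequence Pointwise

lemma exists_good {R : Type} [CommRing R] [IsLocalRing R] [IsNoetherianRing R]
    (h : 0 < (IsLocalRing.maximalIdeal R).height) :
    ∃ x ∈ IsLocalRing.maximalIdeal R, x ∉ (IsLocalRing.maximalIdeal R) ^ 2 ∧
      ∀ P ∈ minimalPrimes R, x ∉ P := by
  classical
  set m := IsLocalRing.maximalIdeal R
  have hm : ∀ P ∈ minimalPrimes R, ¬ m ≤ P := by
    intro P hP hle
    have hPm : P = m := le_antisymm (IsLocalRing.le_maximalIdeal hP.1.1.ne_top) hle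
    rw [hPm] at hP
    have : m.height = 0 := Ideal.height_eq_zero_iff.2 hP
    exact h.ne' this
  by_contra hcon
  push Not at hcon
  have hfin := minimalPrimes.finite_of_isNoetherianRing R
  have := (Ideal.subset_union_prime (s := insert (m ^ 2) hfin.toFinset) (f := id) (m ^ 2) (m ^ 2) (I := m) (by
    intro i hi h1 _
    rcases Finset.mem_insert.1 hi with h2 | h2
    · exact (h1 h2).elim
    · exact (hfin.mem_toFinset.1 h2).1.1)).1 (by
    intro x hx
    by_cases hx2 : x ∈ m ^ 2
    · simp only [Set.mem_iUnion]
      exact ⟨m ^ 2, by simp, hx2⟩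
    · obtain ⟨P, hP, hxP⟩ := hcon x hx hx2
      simp only [Set.mem_iUnion]
      exact ⟨P, by simp [hP], hxP⟩)
  obtain ⟨Q, hQ, hmQ⟩ := this
  rcases Finset.mem_insert.1 hQ with h2 | h2
  · have hbot : m = ⊥ := Submodule.eq_bot_of_le_smul_of_le_jacobson_bot m m (IsNoetherian.noetherian _) (by
      rw [h2] at hmQ
      simpa [pow_two] using hmQ) (by
      rw [IsLocalRing.jacobson_eq_maximalIdeal _ bot_ne_top])
    obtain ⟨P, hP⟩ := Ideal.nonempty_minimalPrimes (I := (⊥ : Ideal R)) bot_ne_top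
    exact hm P hP (hbot ▸ bot_le)
  · exact hm Q (hfin.mem_toFinset.1 h2) hmQ

lemma reg_dom (n : ℕ) : ∀ (R : Type) [CommRing R] [IsLocalRing R] [IsNoetherianRing R] (s : Finset R),
    Ideal.span (s : Set R) = IsLocalRing.maximalIdeal R → s.card ≤ n →
    (n : WithBot ℕ∞) ≤ ringKrullDim R →
    IsDomain R ∧ ∃ rs : List R, rs.length = n ∧ (∀ r ∈ rs, r ∈ IsLocalRing.maximalIdeal R) ∧
      IsWeaklyRegular R rs := by
  classical
  induction n with
  | zero =>
    intro R _ _ _ s hs hc _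
    have : s = ∅ := Finset.card_eq_zero.1 (Nat.le_zero.1 hc)
    subst this
    have hf : IsField R := by
      rw [IsLocalRing.isField_iff_maximalIdeal_eq, ← hs]
      simp
    exact ⟨hf.isDomain, [], rfl, by simp, by simp⟩
  | succ n ih =>
    intro R _ _ _ s hs hc hdim
    obtain ⟨x, hxm, hx2, hxP⟩ := exists_good (R := R) (by
      have := IsLocalRing.maximalIdeal_height_eq_ringKrullDim (R := R)
      rw [← this] at hdim
      have h1 : ((n + 1 : ℕ) : ℕ∞) ≤ (IsLocalRing.maximalIdeal R).height := by exact_mod_cast hdim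
      refine lt_of_lt_of_le ?_ h1
      exact_mod_cast Nat.succ_pos n)
    let J : Ideal R := x • (⊤ : Ideal R)
    have hJ : J = Ideal.span {x} := by simp [J, ← Submodule.ideal_span_singleton_smul]
    have hJm : J ≤ IsLocalRing.maximalIdeal R := by rw [hJ]; simpa using hxm
    have hJt : J ≠ ⊤ := fun h => IsLocalRing.maximalIdeal.isMaximal R |>.ne_top (top_le_iff.1 (h ▸ hJm))
    have : Nontrivial (R ⧸ J) := Ideal.Quotient.nontrivial_iff.2 hJt
    have : IsLocalRing (R ⧸ J) := IsLocalRing.of_surjective' _ Ideal.Quotient.mk_surjective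
    have hmax : (IsLocalRing.maximalIdeal R).map (Ideal.Quotient.mk J) = IsLocalRing.maximalIdeal (R ⧸ J) := by
      exact IsLocalRing.map_maximalIdeal_of_surjective _ Ideal.Quotient.mk_surjective
    -- generator
    have hxs : x ∈ Ideal.span (s : Set R) := hs ▸ hxm
    obtain ⟨c, hc'⟩ := Submodule.mem_span_finset'.1 hxs
    obtain ⟨j, hj⟩ : ∃ j : s, c j ∉ IsLocalRing.maximalIdeal R := by
      by_contra hall
      push Not at hall
      apply hx2
      rw [← hc', pow_two]
      refine sum_mem fun i _ => Ideal.mul_mem_mul (hall i) ?_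
      rw [← hs]; exact Ideal.subset_span i.2
    have hju : IsUnit (c j) := by simpa using hj
    have hspan : Ideal.span (((s.erase j).image (Ideal.Quotient.mk J) : Finset (R ⧸ J)) : Set (R ⧸ J)) =
        IsLocalRing.maximalIdeal (R ⧸ J) := by
      rw [Finset.coe_image, ← Ideal.map_span, ← hmax]
      refine le_antisymm (Ideal.map_mono ?_) ?_
      · rw [← hs]; exact Ideal.span_mono (by simp)
      · rw [← hs, Ideal.map_span, Ideal.span_le]
        rintro _ ⟨a, ha, rfl⟩
        by_cases haj : a = j
        · have hsum : Ideal.Quotient.mk J (c j) * Ideal.Quotient.mk J a ∈ (Ideal.span (↑(s.erase ↑j) : Set R)).map (Ideal.Quotient.mk J) := by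
            have h0 : Ideal.Quotient.mk J x = 0 := Ideal.Quotient.eq_zero_iff_mem.2 (by rw [hJ]; exact Ideal.mem_span_singleton_self x)
            rw [← hc', ← Finset.add_sum_erase _ _ (Finset.mem_univ j), map_add] at h0
            rw [← map_mul, haj]
            rw [show Ideal.Quotient.mk J (c j * j) = - Ideal.Quotient.mk J (∑ x ∈ Finset.univ.erase j, c x • (x : R)) from eq_neg_of_add_eq_zero_left h0]
            refine neg_mem (Ideal.mem_map_of_mem _ (sum_mem fun i hi => Ideal.mul_mem_left _ _ (Ideal.subset_span ?_)))
            have : i ≠ j := (Finset.mem_erase.1 hi).1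
            simp [Subtype.coe_injective.ne this]
          exact (Ideal.unit_mul_mem_iff_mem _ (hju.map (Ideal.Quotient.mk J))).1 hsum
        · exact Ideal.mem_map_of_mem _ (Ideal.subset_span (by simp [haj]; exact ha))
    have hcard : ((s.erase j).image (Ideal.Quotient.mk J)).card ≤ n := by
      refine Finset.card_image_le.trans ?_
      rw [Finset.card_erase_of_mem j.2]
      omega
    have hdim' : (n : WithBot ℕ∞) ≤ ringKrullDim (R ⧸ J) := by
      have h1 := hdim.trans (ringKrullDim_le_ringKrullDim_quotSMulTop_succ hxm)
      have h2 : ((n : WithBot ℕ∞) + 1) ≤ ringKrullDim (R ⧸ J) + 1 := by exact_mod_cast h1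
      have hnb : ringKrullDim (R ⧸ J) ≠ ⊥ := ringKrullDim_ne_bot
      revert h2 hnb
      generalize ringKrullDim (R ⧸ J) = D
      intro h2 hnb
      lift D to ℕ∞ using hnb
      have h3 : ((n : ℕ∞) + 1) ≤ D + 1 := by exact_mod_cast h2
      have h4 : (n : ℕ∞) ≤ D := by simpa using h3
      exact_mod_cast h4
    obtain ⟨hdom, rs, hlen, hrs, hreg⟩ := ih (R ⧸ J) _ hspan hcard hdim'
    have hJp : J.IsPrime := Ideal.Quotient.isDomain_iff_prime J |>.1 hdom
    have hR : IsDomain R := by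
      obtain ⟨P, hP, hPJ⟩ := Ideal.exists_minimalPrimes_le (I := (⊥ : Ideal R)) (J := J) bot_le
      have hPp : P.IsPrime := hP.1.1
      have hPb : P = ⊥ := by
        refine Submodule.eq_bot_of_le_smul_of_le_jacobson_bot J P (IsNoetherian.noetherian _) ?_ (by
          rwa [IsLocalRing.jacobson_eq_maximalIdeal _ bot_ne_top])
        intro y hy
        have hyJ := hPJ hy
        rw [hJ] at hyJ
        obtain ⟨z, rfl⟩ := Ideal.mem_span_singleton'.1 hyJ
        rw [mul_comm]
        refine Submodule.smul_mem_smul (by rw [hJ]; exact Ideal.mem_span_singleton_self x) ?_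
        exact (hPp.mem_or_mem hy).resolve_right (hxP P hP)
      rw [hPb] at hPp
      exact IsDomain.of_bot_isPrime R
    refine ⟨hR, ?_⟩
    have hx0 : x ≠ 0 := by
      rintro rfl
      exact hx2 (Ideal.zero_mem _)
    obtain ⟨rs', hrs'⟩ : ∃ rs' : List R, rs'.map (algebraMap R (R ⧸ J)) = rs := by
      exact List.map_surjective_iff.2 Ideal.Quotient.mk_surjective rs
    refine ⟨x :: rs', by simp [← hlen, ← hrs'], ?_, ?_⟩
    · intro r hr
      rcases List.mem_cons.1 hr with rfl | hr
      · exact hxm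
      · have h3 := hrs (algebraMap R (R ⧸ J) r) (hrs' ▸ List.mem_map_of_mem hr)
        rw [IsLocalRing.mem_maximalIdeal, mem_nonunits_iff] at h3 ⊢
        exact fun hu => h3 (hu.map _)
    · rw [isWeaklyRegular_cons_iff]
      refine ⟨?_, ?_⟩
      · intro a b hab
        exact mul_left_cancel₀ hx0 hab
      · rw [← hrs'] at hreg
        exact (isWeaklyRegular_map_algebraMap_iff (R ⧸ J) (R ⧸ J) rs').1 hreg
end P3
end S10

namespace S10
section P3b
variable {S : Type} [CommRing S] 
open RingTheory.Sequence Pointwise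

lemma devissage2 [IsNoetherianRing S] (J : Ideal S) (Y : ModuleCat.{0} S) (n : ℕ)
    (hJ : ∀ Q : Ideal S, Q.IsPrime → J ≤ Q → Subsingleton (Abelian.Ext (ModuleCat.of S (S ⧸ Q)) Y n)) 
    (M : Type) [AddCommGroup M] [Module S M] [Module.Finite S M] :
    J ≤ Module.annihilator S M → Subsingleton (Abelian.Ext (ModuleCat.of S M) Y n) := by
  refine IsNoetherianRing.induction_on_isQuotientEquivQuotientPrime S (M := M) inferInstance
    (motive := fun M _ _ _ => J ≤ Module.annihilator S M → Subsingleton (Abelian.Ext (ModuleCat.of S M) Y n))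
    ?_ ?_ ?_
  · intro N _ _ _ _ _
    have : Limits.IsZero (ModuleCat.of S N) := ModuleCat.isZero_of_subsingleton _
    refine subsingleton_of_forall_eq 0 fun u => ?_
    rw [← Abelian.Ext.mk₀_id_comp u, this.eq_of_src (𝟙 _) 0, Abelian.Ext.mk₀_zero, Abelian.Ext.zero_comp]
  · intro N _ _ _ Q e hN
    have hQ : J ≤ Q.asIdeal := by
      rwa [e.annihilator_eq, Ideal.annihilator_quotient] at hN
    refine ext_iso_zero n (X' := ModuleCat.of S (S ⧸ Q.asIdeal)) (ModuleCat.ofHom e.toLinearMap)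
      (ModuleCat.ofHom e.symm.toLinearMap) ?_ (hJ _ Q.2 hQ)
    refine ModuleCat.hom_ext (LinearMap.ext fun x => ?_)
    exact e.symm_apply_apply x
  · intro N₁ _ _ _ N₂ _ _ _ N₃ _ _ _ f g hf hg hfg h1 h3 h2
    have i1 := h1 (h2.trans (f.annihilator_le_of_injective hf))
    have i3 := h3 (h2.trans (g.annihilator_le_of_surjective hg))
    let T : ShortComplex (ModuleCat.{0} S) := ShortComplex.mk (ModuleCat.ofHom f) (ModuleCat.ofHom g) (by
      ext x; exact hfg.apply_apply_eq_zero x)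
    have hT : T.ShortExact := by
      refine { exact := ?_, mono_f := ?_, epi_g := ?_ }
      · rw [ShortComplex.ShortExact.moduleCat_exact_iff_function_exact]
        exact hfg
      · rw [ModuleCat.mono_iff_injective]
        exact hf
      · rw [ModuleCat.epi_iff_surjective]
        exact hg
    refine subsingleton_of_forall_eq 0 fun u => ?_
    obtain ⟨v, hv⟩ := Abelian.Ext.contravariant_sequence_exact₂ hT Y u (i1.elim _ _)
    rw [← hv, show v = 0 from i3.elim _ _, Abelian.Ext.comp_zero]

lemma ischebeck [IsLocalRing S] [IsNoetherianRing S] (n : ℕ)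
    (h0 : ∀ i < n, Subsingleton (Abelian.Ext (ModuleCat.of S (S ⧸ IsLocalRing.maximalIdeal S)) (ModuleCat.of S S) i))
    (r : ℕ) : ∀ (P : Ideal S) [hP : P.IsPrime], Order.coheight (⟨P, hP⟩ : PrimeSpectrum S) ≤ r → 
      ∀ i, i + r < n → Subsingleton (Abelian.Ext (ModuleCat.of S (S ⧸ P)) (ModuleCat.of S S) i) := by
  induction r with
  | zero =>
    intro P hP hr i hi
    have hmax : IsMax (⟨P, hP⟩ : PrimeSpectrum S) := Order.coheight_eq_zero.1 (by simpa using hr)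
    have hle : (⟨P, hP⟩ : PrimeSpectrum S) ≤ ⟨IsLocalRing.maximalIdeal S, inferInstance⟩ :=
      IsLocalRing.le_maximalIdeal hP.ne_top
    have hPm : P = IsLocalRing.maximalIdeal S := congrArg PrimeSpectrum.asIdeal (hmax.eq_of_le hle)
    subst hPm
    exact h0 i (by omega)
  | succ r ih =>
    intro P hP hr i hi
    by_cases hPm : P = IsLocalRing.maximalIdeal S
    · subst hPm
      exact h0 i (by omega)
    obtain ⟨x, hxm, hxP⟩ := SetLike.exists_of_lt
      (lt_of_le_of_ne (IsLocalRing.le_maximalIdeal (Ideal.IsPrime.ne_top ‹P.IsPrime›)) hPm)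
    have hreg : IsSMulRegular (ModuleCat.of S (S ⧸ P)) x := by
      change IsSMulRegular (S ⧸ P) x
      intro a b hab
      have hx : Ideal.Quotient.mk P x ≠ 0 := by rwa [Ne, Ideal.Quotient.eq_zero_iff_mem]
      exact mul_left_cancel₀ hx hab
    have hS := hreg.smulShortComplex_shortExact
    have hE : Subsingleton (Abelian.Ext (ModuleCat.of S (QuotSMulTop x (S ⧸ P))) (ModuleCat.of S S) (i + 1)) := by
      refine devissage2 (P ⊔ Ideal.span {x}) _ _ ?_ _ ?_
      · intro Q hQ hle
        have hlt : (⟨P, hP⟩ : PrimeSpectrum S) < ⟨Q, hQ⟩ := by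
          refine lt_of_le_of_ne (show P ≤ Q from le_sup_left.trans hle) ?_
          intro h
          have h' : P = Q := congrArg PrimeSpectrum.asIdeal h
          subst h'
          exact hxP (hle (Ideal.mem_sup_right (Ideal.mem_span_singleton_self x)))
        refine ih Q ?_ (i + 1) (by omega)
        have h1 := (Order.coheight_add_one_le hlt).trans hr
        have h2 : Order.coheight (⟨Q, hQ⟩ : PrimeSpectrum S) + 1 ≤ (r : ℕ∞) + 1 := by exact_mod_cast h1
        simpa using h2
      · refine sup_le ?_ ?_
        · refine le_trans (Ideal.annihilator_quotient (I := P)).ge ?_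
          exact LinearMap.annihilator_le_of_surjective (Submodule.mkQ _) (Submodule.mkQ_surjective _)
        · rw [Ideal.span_singleton_le_iff_mem, Module.mem_annihilator]
          intro m
          obtain ⟨y, rfl⟩ := Submodule.mkQ_surjective _ m
          rw [← map_smul]
          simp only [Submodule.mkQ_apply, Submodule.Quotient.mk_eq_zero]
          exact Submodule.smul_mem_pointwise_smul _ _ _ trivial
    have hfin : Module.Finite S (Abelian.Ext (ModuleCat.of S (S ⧸ P)) (ModuleCat.of S S) i) :=
      ModuleCat.finite_ext _ _ _ _
    have hbot : (⊤ : Submodule S (Abelian.Ext (ModuleCat.of S (S ⧸ P)) (ModuleCat.of S S) i)) = ⊥ := by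
      refine Submodule.eq_bot_of_le_smul_of_le_jacobson_bot (Ideal.span {x}) _ hfin.fg_top ?_ ?_
      · intro u _
        obtain ⟨g, hg⟩ := Abelian.Ext.contravariant_sequence_exact₁ hS (ModuleCat.of S S)
          (n₁ := i + 1) u (add_comm _ _) (hE.elim _ _)
        have h2 : u = x • g := by
          rw [← hg]
          have h3 := ModuleCat.smulShortComplex_f_eq_smul_id (ModuleCat.of S (S ⧸ P)) x
          refine (congrArg (fun t => (Abelian.Ext.mk₀ t).comp g (zero_add i)) h3).trans ?_
          have h4 : ∀ (X : ModuleCat.{0} S) (g : Abelian.Ext X (ModuleCat.of S S) i),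
              (Abelian.Ext.mk₀ (x • 𝟙 X)).comp g (zero_add i) = x • g := by
            intro X g
            rw [Abelian.Ext.mk₀_smul, Abelian.Ext.smul_comp, Abelian.Ext.mk₀_id_comp]
          exact h4 (ModuleCat.of S (S ⧸ P)) g
        rw [h2]
        exact Submodule.smul_mem_smul (Ideal.mem_span_singleton_self x) trivial
      · rw [IsLocalRing.jacobson_eq_maximalIdeal _ bot_ne_top, Ideal.span_singleton_le_iff_mem]
        exact hxm
    exact (Submodule.subsingleton_iff S).1 (subsingleton_of_bot_eq_top hbot.symm)
end P3b
end S10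

namespace S10
section P3c
variable {S : Type} [CommRing S] 
open RingTheory.Sequence Pointwise

lemma length_le_height [IsNoetherianRing S] (rs : List S) (h : IsWeaklyRegular S rs) (P : Ideal S) [P.IsPrime]
    (hP : ∀ r ∈ rs, r ∈ P) : (rs.length : ℕ∞) ≤ P.height := by
  have h1 := h.isRegular_of_isLocalization_of_mem (Localization.AtPrime P) P hP
  have h2 := ringKrullDim_add_length_eq_ringKrullDim_of_isRegular _ h1
  rw [IsLocalization.AtPrime.ringKrullDim_eq_height P (Localization.AtPrime P), List.length_map] at h2
  have : Nontrivial (Localization.AtPrime P ⧸ Ideal.ofList (rs.map (algebraMap S (Localization.AtPrime P)))) := by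
    rw [Ideal.Quotient.nontrivial_iff]
    have := h1.top_ne_smul
    intro h
    apply this
    rw [h]
    simp
  have h3 : ((0 : ℕ∞) : WithBot ℕ∞) ≤ ringKrullDim (Localization.AtPrime P ⧸ Ideal.ofList (rs.map (algebraMap S (Localization.AtPrime P)))) :=
    ringKrullDim_nonneg_of_nontrivial
  have h4 : ((rs.length : ℕ∞) : WithBot ℕ∞) ≤ (P.height : WithBot ℕ∞) := by
    rw [← h2]
    calc ((rs.length : ℕ∞) : WithBot ℕ∞) = ((0 : ℕ∞) : WithBot ℕ∞) + (rs.length : WithBot ℕ∞) := by simp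
      _ ≤ _ := by gcongr
  exact_mod_cast h4

lemma exists_seq [IsLocalRing S] [IsNoetherianRing S] (n d : ℕ) (hdim : ringKrullDim S = n)
    (rs : List S) (hlen : rs.length = n) (hm : ∀ r ∈ rs, r ∈ IsLocalRing.maximalIdeal S) (hreg : IsWeaklyRegular S rs)
    (P : Ideal S) [hP : P.IsPrime] (hht : P.height = d) :
    ∃ rs : List S, rs.length = d ∧ (∀ r ∈ rs, r ∈ P) ∧ IsRegular S rs ∧
      ∃ w : S, ∀ a, a * w ∈ Ideal.ofList rs ↔ a ∈ P := by
  have hco : (d : ℕ∞) + Order.coheight (⟨P, hP⟩ : PrimeSpectrum S) ≤ n := by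
    have h1 : ((Order.height (⟨P, hP⟩ : PrimeSpectrum S) + Order.coheight (⟨P, hP⟩ : PrimeSpectrum S) : ℕ∞) : WithBot ℕ∞) ≤ n := by
      rw [← hdim, ringKrullDim, Order.krullDim_eq_iSup_height_add_coheight_of_nonempty]
      exact WithBot.coe_le_coe.2 (le_iSup (fun a : PrimeSpectrum S => Order.height a + Order.coheight a) _)
    rw [← PrimeSpectrum.height_eq_orderHeight] at h1
    change ((P.height + _ : ℕ∞) : WithBot ℕ∞) ≤ _ at h1
    rw [hht] at h1
    exact_mod_cast h1
  obtain ⟨c, hc⟩ : ∃ c : ℕ, Order.coheight (⟨P, hP⟩ : PrimeSpectrum S) = c := by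
    refine ⟨_, (ENat.natCast_toNat ?_).symm⟩
    intro h
    rw [h] at hco
    simp at hco
  rw [hc] at hco
  have hco' : d + c ≤ n := by exact_mod_cast hco
  have hM : (IsLocalRing.maximalIdeal S) • (⊤ : Submodule S (ModuleCat.of S S)) < ⊤ := by
    change (IsLocalRing.maximalIdeal S) • (⊤ : Ideal S) < ⊤
    simpa using (IsLocalRing.maximalIdeal.isMaximal S).ne_top.lt_top
  have h0 : ∀ i < n, Subsingleton (Abelian.Ext (ModuleCat.of S (S ⧸ IsLocalRing.maximalIdeal S)) (ModuleCat.of S S) i) := by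
    subst hlen
    refine ModuleCat.subsingleton_ext_of_exists_isRegular (IsLocalRing.maximalIdeal S) _ ?_ _ hM rs hm ?_
    · change Module.support S (S ⧸ IsLocalRing.maximalIdeal S) ⊆ _
      rw [Module.support_eq_zeroLocus, Ideal.annihilator_quotient]
    · exact (IsLocalRing.isRegular_iff_isWeaklyRegular_of_subset_maximalIdeal hm).2 hreg
  have h1 := ischebeck n h0 c P hc.le
  obtain ⟨rs, hlen, hrP, hrs⟩ := ModuleCat.exists_isRegular_of_exists_subsingleton_ext P d (ModuleCat.of S S) (by
      change P • (⊤ : Ideal S) < ⊤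
      simpa using hP.ne_top.lt_top) (ModuleCat.of S (S ⧸ P)) (by
      change Module.support S (S ⧸ P) = _
      rw [Module.support_eq_zeroLocus, Ideal.annihilator_quotient]) (fun i hi => h1 i (by omega))
  refine ⟨rs, hlen, hrP, hrs, ?_⟩
  have hmin : P ∈ (Ideal.ofList rs).minimalPrimes := by
    have : P.FiniteHeight := Ideal.finiteHeight_of_isNoetherianRing P
    refine Ideal.mem_minimalPrimes_of_height_le (Ideal.span_le.2 hrP) ?_
    rw [hht, Ideal.height_eq_inf_minimalPrimes]
    refine le_iInf₂ fun Q hQ => ?_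
    have := hQ.1.1
    rw [← hlen]
    exact length_le_height rs hrs.1 Q (fun r hr => hQ.1.2 (Ideal.subset_span hr))
  have hass := Module.associatedPrimes.minimalPrimes_annihilator_subset_associatedPrimes S (S ⧸ Ideal.ofList rs)
    (by rwa [Ideal.annihilator_quotient])
  rw [AssociatedPrimes.mem_iff, isAssociatedPrime_iff] at hass
  obtain ⟨_, x, hx⟩ := hass
  obtain ⟨w, rfl⟩ := Ideal.Quotient.mk_surjective x
  refine ⟨w, fun a => ?_⟩
  rw [hx, Submodule.mem_colon_singleton, Submodule.mem_bot, ← Ideal.Quotient.eq_zero_iff_mem]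
  rfl
end P3c
end S10

namespace S10
section P5
open RingTheory.Sequence Pointwise
variable {R : Type} [CommRing R] [IsNoetherianRing R] (p q : Ideal R) [p.IsPrime] [q.IsPrime] (hpq : p ≤ q)

include hpq in
lemma primes_above (d : ℕ) (hp : p.height = d) (hq : q.height = d + 1) :
    p.map (algebraMap R (Localization.AtPrime q)) ≠ IsLocalRing.maximalIdeal (Localization.AtPrime q) ∧
    ∀ Q : Ideal (Localization.AtPrime q), Q.IsPrime → p.map (algebraMap R (Localization.AtPrime q)) < Q →
      Q = IsLocalRing.maximalIdeal (Localization.AtPrime q) := by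
  have hcm := Ideal.under_map_of_isLocalizationAtPrime (S := Localization.AtPrime q) q hpq
  constructor
  · intro h
    have h1 := Localization.AtPrime.under_maximalIdeal (I := q)
    rw [← h, hcm] at h1
    subst h1
    rw [hp] at hq
    have : d = d + 1 := by exact_mod_cast hq
    omega
  · intro Q hQ hlt
    have h1 : p ≤ Q.under R := by
      rw [← hcm]; exact Ideal.comap_mono hlt.le
    have hQp : (Q.under R).IsPrime := Ideal.IsPrime.under R Q
    have h2 : p < Q.under R := by
      refine lt_of_le_of_ne h1 ?_
      intro h
      apply hlt.ne
      rw [h]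
      exact IsLocalization.map_under q.primeCompl _ Q
    have h3 : Q.under R ≤ q := by
      have := Ideal.comap_mono (f := algebraMap R (Localization.AtPrime q)) (IsLocalRing.le_maximalIdeal hQ.ne_top)
      exact this.trans (Localization.AtPrime.under_maximalIdeal (I := q)).le
    rw [← Localization.AtPrime.eq_maximalIdeal_iff_under_eq]
    by_contra hne
    have : (Q.under R).FiniteHeight := Ideal.finiteHeight_of_isNoetherianRing _
    have : p.FiniteHeight := Ideal.finiteHeight_of_isNoetherianRing _
    have : q.FiniteHeight := Ideal.finiteHeight_of_isNoetherianRing _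
    have h4 := Ideal.height_strict_mono_of_isPrime_of_isPrime h2
    have h5 := Ideal.height_strict_mono_of_isPrime_of_isPrime (lt_of_le_of_ne h3 hne)
    rw [hp] at h4
    rw [hq] at h5
    generalize (Q.under R).height = e at h4 h5
    have he : e ≠ ⊤ := ne_top_of_lt h5
    lift e to ℕ using he
    have h6 : d < e := by exact_mod_cast h4
    have h7 : e < d + 1 := by exact_mod_cast h5
    omega

lemma loc_mem (H : Type) [AddCommGroup H] [Module R H] (t : H) (ht : t ∈ Submodule.torsionBySet R H (p : Set R)) :
    LocalizedModule.mkLinearMap q.primeCompl H t ∈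
      Submodule.torsionBySet (Localization.AtPrime q) (LocalizedModule q.primeCompl H)
        ((p.map (algebraMap R (Localization.AtPrime q)) : Ideal _) : Set (Localization.AtPrime q)) := by
  rw [Submodule.mem_torsionBySet_iff] at ht ⊢
  have hle : p.map (algebraMap R (Localization.AtPrime q)) ≤
      LinearMap.ker (LinearMap.toSpanSingleton (Localization.AtPrime q) _ (LocalizedModule.mkLinearMap q.primeCompl H t)) := by
    rw [Ideal.map_le_iff_le_comap]
    intro a ha
    rw [Ideal.mem_comap, LinearMap.mem_ker, LinearMap.toSpanSingleton_apply, algebraMap_smul, ← map_smul]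
    rw [show a • t = 0 from ht ⟨a, ha⟩, map_zero]
  rintro ⟨a, ha⟩
  exact hle ha

lemma loc_fg (H : Type) [AddCommGroup H] [Module R H] (hfg : (Submodule.torsionBySet R H (p : Set R)).FG) :
    (Submodule.torsionBySet (Localization.AtPrime q) (LocalizedModule q.primeCompl H)
        ((p.map (algebraMap R (Localization.AtPrime q)) : Ideal _) : Set (Localization.AtPrime q))).FG := by
  classical
  obtain ⟨T, hT⟩ := hfg
  refine ⟨T.image (LocalizedModule.mkLinearMap q.primeCompl H), le_antisymm ?_ ?_⟩
  · rw [Submodule.span_le, Finset.coe_image]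
    rintro _ ⟨t, ht, rfl⟩
    exact loc_mem p q H t (hT ▸ Submodule.subset_span ht)
  · intro x hx
    rw [Submodule.mem_torsionBySet_iff] at hx
    obtain ⟨⟨h, s⟩, hs⟩ := IsLocalizedModule.surj q.primeCompl (LocalizedModule.mkLinearMap q.primeCompl H) x
    have hkill : ∀ a ∈ p, ∃ u : q.primeCompl, u • (a • h) = 0 := by
      intro a ha
      have h1 := hx ⟨algebraMap R _ a, Ideal.mem_map_of_mem _ ha⟩
      have h2 : LocalizedModule.mkLinearMap q.primeCompl H (a • h) = LocalizedModule.mkLinearMap q.primeCompl H 0 := by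
        rw [map_smul, ← hs, map_zero, smul_comm]
        have h3 : a • x = 0 := by rw [← algebraMap_smul (Localization.AtPrime q) a x]; exact h1
        rw [h3, smul_zero]
      obtain ⟨u, hu⟩ := IsLocalizedModule.exists_of_eq (S := q.primeCompl) h2
      exact ⟨u, by rw [hu, smul_zero]⟩
    obtain ⟨G, hG⟩ := (IsNoetherian.noetherian p : p.FG)
    have hfin : ∀ G : Finset R, (G : Set R) ⊆ p → ∃ u : q.primeCompl, ∀ a ∈ G, a • (u • h) = 0 := by
      intro G
      induction G using Finset.induction_on with
      | empty => intro _; exact ⟨1, by simp⟩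
      | insert b G _ ih =>
        intro hsub
        obtain ⟨u, hu⟩ := ih (fun a ha => hsub (by simp [show a ∈ G from ha]))
        obtain ⟨v, hv⟩ := hkill b (hsub (by simp))
        refine ⟨u * v, fun a ha => ?_⟩
        rcases Finset.mem_insert.1 ha with rfl | ha
        · rw [smul_comm, mul_smul, hv, smul_zero]
        · rw [mul_comm, mul_smul, smul_comm, hu a ha, smul_zero]
    obtain ⟨u, hu⟩ := hfin G (by rw [← hG]; exact Submodule.subset_span)
    have huh : u • h ∈ Submodule.torsionBySet R H (p : Set R) := by
      rw [Submodule.mem_torsionBySet_iff]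
      have hle : p ≤ LinearMap.ker (LinearMap.toSpanSingleton R _ (u • h)) := by
        rw [← hG]
        exact Submodule.span_le.2 hu
      rintro ⟨a, ha⟩
      exact hle ha
    rw [← hT] at huh
    let W : Submodule (Localization.AtPrime q) (LocalizedModule q.primeCompl H) :=
      Submodule.span (Localization.AtPrime q) ((T.image (LocalizedModule.mkLinearMap q.primeCompl H) : Finset _) : Set _)
    have hW : Submodule.span R (T : Set H) ≤ (W.restrictScalars R).comap (LocalizedModule.mkLinearMap q.primeCompl H) := by
      rw [Submodule.span_le]
      intro t ht
      exact Submodule.subset_span (by simpa using ⟨t, ht, rfl⟩)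
    have h1 : LocalizedModule.mkLinearMap q.primeCompl H (u • h) ∈ W := hW huh
    have h2 : LocalizedModule.mkLinearMap q.primeCompl H (u • h) = algebraMap R (Localization.AtPrime q) (u * s : q.primeCompl) • x := by
      rw [algebraMap_smul]
      refine (map_smul (LocalizedModule.mkLinearMap q.primeCompl H) (u : R) h).trans ?_
      rw [← hs]
      exact (mul_smul (u : R) (s : R) x).symm
    rw [h2] at h1
    obtain ⟨v, hv⟩ := IsLocalization.map_units (Localization.AtPrime q) (u * s)
    rw [← hv] at h1
    have := W.smul_mem (↑v⁻¹ : Localization.AtPrime q) h1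
    rwa [smul_smul, Units.inv_mul, one_smul] at this

include hpq in
lemma loc_ne (H : Type) [AddCommGroup H] [Module R H] (t : H) (ht : ∀ a : R, a • t = 0 ↔ a ∈ p) :
    Submodule.torsionBySet (Localization.AtPrime q) (LocalizedModule q.primeCompl H)
        ((p.map (algebraMap R (Localization.AtPrime q)) : Ideal _) : Set (Localization.AtPrime q)) ≠ ⊥ := by
  intro h
  have h1 := loc_mem p q H t (by
    rw [Submodule.mem_torsionBySet_iff]
    rintro ⟨a, ha⟩
    exact (ht a).2 ha)
  rw [h, Submodule.mem_bot, ← map_zero (LocalizedModule.mkLinearMap q.primeCompl H)] at h1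
  obtain ⟨u, hu⟩ := IsLocalizedModule.exists_of_eq (S := q.primeCompl) h1
  rw [smul_zero] at hu
  exact u.2 (hpq ((ht u).1 hu))

lemma idealHeight_aux (p : Ideal R) [hp : p.IsPrime] :
    sInf {h : ℕ∞ | ∃ P : PrimeSpectrum R, p ≤ P.asIdeal ∧ Order.height P = h} = p.height := by
  have h0 := PrimeSpectrum.height_eq_orderHeight (⟨p, hp⟩ : PrimeSpectrum R)
  refine le_antisymm ?_ ?_
  · exact sInf_le ⟨⟨p, hp⟩, le_rfl, h0.symm⟩
  · refine le_sInf ?_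
    rintro _ ⟨P, hP, rfl⟩
    rw [show p.height = _ from h0]
    exact Order.height_mono hP

include hpq in
lemma main (rs : List R) (hrp : ∀ r ∈ rs, r ∈ p) (hrs : IsRegular R rs) (w : R)
    (hw : ∀ a, a * w ∈ Ideal.ofList rs ↔ a ∈ p) (hp : p.height = rs.length) (hq : q.height = rs.length + 1) :
    ¬ Module.Injective (Localization.AtPrime q)
      ((localCohomology (p.map (algebraMap R (Localization.AtPrime q))) rs.length).obj
        (ModuleCat.of (Localization.AtPrime q) (Localization.AtPrime q)) : Type) ∧
    Nontrivial (Abelian.Ext (ModuleCat.of (Localization.AtPrime q)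
          (IsLocalRing.ResidueField (Localization.AtPrime q)))
      (ModuleCat.of (Localization.AtPrime q) (LocalizedModule q.primeCompl
        ((localCohomology p rs.length).obj (ModuleCat.of R R) : Type))) 1) := by
  obtain ⟨hne, habove⟩ := primes_above p q hpq _ hp hq
  have hPp : (p.map (algebraMap R (Localization.AtPrime q))).IsPrime :=
    Ideal.isPrime_map_of_isLocalizationAtPrime q hpq
  constructor
  · intro hinj
    have hreg := hrs.1.isRegular_of_isLocalization_of_mem (Localization.AtPrime q) q (fun r hr => hpq (hrp r hr))
    have hmap : Ideal.ofList (rs.map (algebraMap R (Localization.AtPrime q))) =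
        (Ideal.ofList rs).map (algebraMap R (Localization.AtPrime q)) := (Ideal.map_ofList _ _).symm
    have hB := lemmaB (p.map (algebraMap R (Localization.AtPrime q))) hPp.ne_top _ (by
      intro r hr
      obtain ⟨b, hb, rfl⟩ := List.mem_map.1 hr
      exact Ideal.mem_map_of_mem _ (hrp b hb)) hreg
    rw [List.length_map] at hB
    obtain ⟨hfg, hB⟩ := hB
    have hle : p.map (algebraMap R (Localization.AtPrime q)) ≤
        Submodule.comap (M₂ := Localization.AtPrime q)
          (LinearMap.toSpanSingleton (Localization.AtPrime q) (Localization.AtPrime q) (algebraMap R _ w))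
          ((Ideal.ofList rs).map (algebraMap R (Localization.AtPrime q))) := by
      rw [Ideal.map_le_iff_le_comap]
      intro a ha
      change algebraMap R (Localization.AtPrime q) a * algebraMap R (Localization.AtPrime q) w ∈
        (Ideal.ofList rs).map (algebraMap R (Localization.AtPrime q))
      rw [← map_mul]
      exact Ideal.mem_map_of_mem _ ((hw a).2 ha)
    obtain ⟨ζ, hζ⟩ := hB (algebraMap R _ w) (fun a ha => by rw [hmap]; exact hle ha)
    have hnt := lemmaA _ hne habove _ hfg (by
      intro hbot
      have hz : ζ ∈ (⊥ : Submodule (Localization.AtPrime q) _) := by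
        rw [← hbot, Submodule.mem_torsionBySet_iff]
        rintro ⟨a, ha⟩
        exact (hζ a).2 (by rw [hmap]; exact hle ha)
      rw [Submodule.mem_bot] at hz
      have h1 := (hζ 1).1 (by rw [hz, smul_zero])
      rw [hmap, one_mul, IsLocalization.mem_map_algebraMap_iff q.primeCompl] at h1
      obtain ⟨⟨⟨b, hb⟩, s⟩, hbs⟩ := h1
      dsimp only at hbs
      rw [← map_mul] at hbs
      obtain ⟨c, hc⟩ := (IsLocalization.eq_iff_exists q.primeCompl _).1 hbs
      have h2 : ((c : R) * s) * w ∈ Ideal.ofList rs := by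
        rw [show ((c : R) * s) * w = c * b by rw [← hc]; ring]
        exact Ideal.mul_mem_left _ _ hb
      exact (c * s).2 (hpq ((hw _).1 h2)))
    have := hinj
    have hI : Injective (ModuleCat.of (Localization.AtPrime q) ((localCohomology (p.map (algebraMap R (Localization.AtPrime q))) rs.length).obj
        (ModuleCat.of (Localization.AtPrime q) (Localization.AtPrime q)) : Type)) :=
      Module.injective_object_of_injective_module _ _
    obtain ⟨x, y, hxy⟩ := hnt
    exact hxy ((Abelian.Ext.eq_zero_of_injective (n := 0) x).trans (Abelian.Ext.eq_zero_of_injective (n := 0) y).symm)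
  · obtain ⟨hfg, hB⟩ := lemmaB p (Ideal.IsPrime.ne_top ‹_›) rs hrp hrs
    obtain ⟨ζ, hζ⟩ := hB w (fun a ha => (hw a).2 ha)
    exact lemmaA _ hne habove _ (loc_fg p q _ hfg) (loc_ne p q hpq _ ζ (fun a => (hζ a).trans (hw a)))
end P5
end S10

/-- Regular local ring `R` of dimension `n` containing a field,
primes `p ⊆ q` with `ht p = n-2`, `ht q = n-1`.  Then `H_{pR_q}^{n-2}(R_q)` is not an
injective `R_q`-module; equivalently `μ^1(q, H_p^{n-2}(R)) ≠ 0`. -/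
theorem stmt10 (R : Type) [CommRing R] [IsLocalRing R]
    (hreg : IsRegularLocal R) (hfield : ContainsField R)
    (n : ℕ) (hdim : ringKrullDim R = (n : WithBot ℕ∞))
    (p q : Ideal R) [p.IsPrime] [q.IsPrime] (hpq : p ≤ q)
    (hp : idealHeight R p + 2 = (n : ℕ∞))
    (hq : idealHeight R q + 1 = (n : ℕ∞)) :
    ¬ Module.Injective (Localization.AtPrime q)
        (LocalCohomologyMod (Localization.AtPrime q)
          (p.map (algebraMap R (Localization.AtPrime q))) (n - 2)) ∧
      BassNumberNonzero R q (LocalCohomologyMod R p (n - 2)) 1 := by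
  have hN : IsNoetherianRing R := hreg.1
  obtain ⟨s, hs, hcard⟩ := hreg.2
  rw [hdim] at hcard
  have hcard' : s.card = n := by exact_mod_cast hcard
  obtain ⟨_, rs₀, hlen₀, hm₀, hreg₀⟩ := S10.reg_dom n R s hs hcard'.le hdim.ge
  rw [show idealHeight R p = p.height from S10.idealHeight_aux p] at hp
  rw [show idealHeight R q = q.height from S10.idealHeight_aux q] at hq
  obtain ⟨d, hd⟩ : ∃ d : ℕ, p.height = d := by
    refine ⟨_, (ENat.natCast_toNat ?_).symm⟩
    intro h
    rw [h] at hp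
    simp at hp
  obtain ⟨e, he⟩ : ∃ e : ℕ, q.height = e := by
    refine ⟨_, (ENat.natCast_toNat ?_).symm⟩
    intro h
    rw [h] at hq
    simp at hq
  rw [hd] at hp
  rw [he] at hq
  have hp1 : d + 2 = n := by exact_mod_cast hp
  have hq1 : e + 1 = n := by exact_mod_cast hq
  obtain ⟨rs, hlen, hrp, hrs, w, hw⟩ := S10.exists_seq n d hdim rs₀ hlen₀ hm₀ hreg₀ p hd
  have hn : n - 2 = rs.length := by omega
  rw [hn]
  obtain ⟨h1, h2⟩ := S10.main p q hpq rs hrp hrs w hw (by rw [hd, hlen]) (by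
    rw [he, hlen]
    have : e = d + 1 := by omega
    rw [this]
    push_cast
    rfl)
  refine ⟨h1, ?_⟩
  exact (S10.bridge _ _ 1).toEquiv.nontrivial
end
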